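/- The set {(f,T) ∈ 𝓒^1 × 𝓔^1 : Ω(f,T) is a periodic orbit of T} is an open subset of 𝓒^1 × 𝓔^1. -/

import Mathlib

/-!
The proof is by perturbation of a pair `(f, T)` whose set `Ω(f, T)` is a periodic orbit `O`.

All pairs in a small `C^1`-neighbourhood share explicit bounds (`eventually_good`): exponential
expansion of the lifts, Lipschitz constants and a sup bound; they are collected in `Good`.
Expansion shadows any orbit segment by a periodic one, so Birkhoff sums of `f - β` are bounded above
(`Good.bsum_le`). Their supremum over segments ending at a point is a Lipschitz sub-action `g`,
`g + f - β ≤ g ∘ T`, with bounds depending only on the common constants (`Good.exists_subaction`).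
By the closing lemma `Good.closing`, `Ω` is the set of points accumulated by periodic points whose
Birkhoff sums of `f - β` over a period are almost zero.

The main step is upper semicontinuity at `(f, T)` (`Good.near_Omega`): almost maximizing periodic
points of a nearby pair are close to `O`. Otherwise one passes to an ultrafilter limit of the
sub-actions and of the two-sided orbits of such periodic points. The limit is a two-sided `T`-orbit
along which a Lipschitz sub-action of `(f, T)` is calibrated (`g + f - β = g ∘ T`). Its limit points
at both ends of time lie in `Ω = O`, so, `O` being one periodic orbit, the orbit can be closed up at
`O` with almost no loss of Birkhoff sum and therefore lies in `Ω` (`Good.biinfinite_mem_Omega`), a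
contradiction.

Finally, the non-empty invariant set `Ω` of a nearby pair lies close to `O`, so its orbits follow the
itinerary of `O`; expansiveness then leaves exactly one orbit, which is periodic
(`Good.periodicOrbit_of_near`).
-/

open MeasureTheory Topology Filter Set
open scoped UniformConvergence

noncomputable section

/-- The circle `ℝ/ℤ`. -/
abbrev Circle1 : Type := AddCircle (1 : ℝ)

/-- The canonical representative in `[0,1)` of a point of `ℝ/ℤ`. -/
noncomputable def rep (z : Circle1) : ℝ := (AddCircle.equivIco 1 0 z : ℝ)

/-- The circle map induced by a lift `F : ℝ → ℝ`. -/
noncomputable def cmap (F : ℝ → ℝ) : Circle1 → Circle1 := fun z => ((F (rep z) : ℝ) : Circle1)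

/-- The data determining the `C^r` topology: all derivatives of order `≤ r`, viewed in the
space of functions `ℝ → ℝ` with the uniform-convergence topology. -/
noncomputable def crSeq (r : ℕ∞) (f : ℝ → ℝ) : ℕ → (ℝ →ᵤ ℝ) :=
  fun k => UniformFun.ofFun (if (k : ℕ∞) ≤ r then iteratedDeriv k f else 0)

/-- The space `𝓒^r` of `C^r` functions `ℝ/ℤ → ℝ`. -/
def CrFun (r : ℕ∞) : Type := {f : Circle1 → ℝ // ContDiff ℝ r fun x : ℝ => f ↑x}

/-- The `C^r` topology on `𝓒^r`. -/
noncomputable instance (r : ℕ∞) : TopologicalSpace (CrFun r) :=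
  TopologicalSpace.induced (fun f : CrFun r => crSeq r fun x : ℝ => f.1 ↑x) inferInstance

/-- `F : ℝ → ℝ` is a lift of a `C^r` expanding circle map: it is `C^r`, sends `x+1` to
`F x + d` for a fixed integer `d`, and `|(Fⁿ)'| ≥ C λⁿ` for some `C > 0`, `λ > 1`. -/
def ExpandingLift (r : ℕ∞) (F : ℝ → ℝ) : Prop :=
  ContDiff ℝ r F ∧ (∃ d : ℤ, ∀ x : ℝ, F (x + 1) = F x + d) ∧
    ∃ C > (0 : ℝ), ∃ l > (1 : ℝ), ∀ n : ℕ, 1 ≤ n → ∀ x : ℝ, C * l ^ n ≤ |deriv (F^[n]) x|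

/-- The space `𝓔^r` of (lifts of) `C^r` expanding circle maps, with the `C^r` topology. -/
def ExpMap (r : ℕ∞) : Type := {F : ℝ → ℝ // ExpandingLift r F}

noncomputable instance (r : ℕ∞) : TopologicalSpace (ExpMap r) :=
  TopologicalSpace.induced (fun F : ExpMap r => crSeq r F.1) inferInstance

/-- `μ` is a `T`-invariant Borel probability measure. -/
def InvProb (T : Circle1 → Circle1) (μ : Measure Circle1) : Prop :=
  IsProbabilityMeasure μ ∧ μ.map T = μ

/-- `β(f,T)`, the maximal ergodic average. -/
noncomputable def beta (f : Circle1 → ℝ) (T : Circle1 → Circle1) : ℝ :=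
  sSup ((fun μ : Measure Circle1 => ∫ x, f x ∂μ) '' {μ | InvProb T μ})

/-- `μ` is a maximizing measure for `(f,T)`. -/
def IsMaximizing (f : Circle1 → ℝ) (T : Circle1 → Circle1) (μ : Measure Circle1) : Prop :=
  InvProb T μ ∧ ∫ x, f x ∂μ = beta f T

/-- `μ` is a periodic measure: an invariant measure supported on a periodic orbit. -/
def IsPeriodicMeasure (T : Circle1 → Circle1) (μ : Measure Circle1) : Prop :=
  InvProb T μ ∧ ∃ x : Circle1, ∃ n : ℕ, 0 < n ∧ T^[n] x = x ∧
    μ (Set.range fun k : ℕ => T^[k] x) = 1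

/-- `(f,T)` is uniquely maximized by a periodic measure. -/
def UniqMaxPeriodic (f : Circle1 → ℝ) (T : Circle1 → Circle1) : Prop :=
  ∃ μ : Measure Circle1, IsMaximizing f T μ ∧ IsPeriodicMeasure T μ ∧
    ∀ ν : Measure Circle1, IsMaximizing f T ν → ν = μ

/-- A (continuous) sub-action for `(f,T)`. -/
def IsSubaction (f : Circle1 → ℝ) (T : Circle1 → Circle1) (g : Circle1 → ℝ) : Prop :=
  Continuous g ∧ ∀ x, g x + f x ≤ g (T x) + beta f T

/-- A calibrated sub-action for `(f,T)`. -/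
def IsCalibrated (f : Circle1 → ℝ) (T : Circle1 → Circle1) (g : Circle1 → ℝ) : Prop :=
  IsSubaction f T g ∧ ∀ x, ∃ y, T y = x ∧ g y + f y = g x + beta f T

/-- `G_{f,T}`: the set of Lipschitz calibrated sub-actions of `(f,T)`. -/
def Gset (f : Circle1 → ℝ) (T : Circle1 → Circle1) : Set (Circle1 → ℝ) :=
  {g | (∃ K : NNReal, LipschitzWith K g) ∧ IsCalibrated f T g}

/-- The set `E_{f,T,g}`. -/
def Eset (f : Circle1 → ℝ) (T : Circle1 → Circle1) (g : Circle1 → ℝ) : Set Circle1 :=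
  {x | g x + f x = g (T x) + beta f T}

/-- The set `Λ*_{f,T,g}`. -/
def LambdaStar (f : Circle1 → ℝ) (T : Circle1 → Circle1) (g : Circle1 → ℝ) : Set Circle1 :=
  {x | ∀ n : ℕ, T^[n] x ∈ Eset f T g}

/-- The set `Λ_{f,T,g}`. -/
def Lambda (f : Circle1 → ℝ) (T : Circle1 → Circle1) (g : Circle1 → ℝ) : Set Circle1 :=
  ⋂ n : ℕ, T^[n] '' LambdaStar f T g

/-- The set `K(f,T)`. -/
def Kset (f : Circle1 → ℝ) (T : Circle1 → Circle1) : Set Circle1 :=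
  ⋃ g ∈ Gset f T, Lambda f T g

/-- The `(f,T)`-non-wandering set `Ω(f,T)`. -/
def OmegaSet (f : Circle1 → ℝ) (T : Circle1 → Circle1) : Set Circle1 :=
  {x | ∀ ε > (0 : ℝ), ∃ n : ℕ, 1 ≤ n ∧ ∃ z : Circle1, T^[n] z = x ∧ dist z x < ε ∧
    |∑ i ∈ Finset.range n, (f (T^[i] z) - beta f T)| < ε}

/-- `A` is a periodic orbit of `T`. -/
def IsPeriodicOrbit (T : Circle1 → Circle1) (A : Set Circle1) : Prop :=
  ∃ x : Circle1, (∃ n : ℕ, 0 < n ∧ T^[n] x = x) ∧ A = Set.range fun k : ℕ => T^[k] x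

/-- `A` is a `T`-minimal set: a nonempty compact invariant set with no proper nonempty
compact invariant subset. -/
def IsMinimalSet (T : Circle1 → Circle1) (A : Set Circle1) : Prop :=
  A.Nonempty ∧ IsCompact A ∧ T '' A ⊆ A ∧
    ∀ B ⊆ A, B.Nonempty → IsCompact B → T '' B ⊆ B → B = A

/-- The space of `C^r` families of functions on the circle with `q` parameters,
i.e. maps `(t,x) ↦ f_t(x)` that are jointly `C^r` (the circle variable via a lift). -/
def FamFun (r : ℕ∞) (q : ℕ) : Type :=
  {G : ((Fin q → ℝ) × ℝ) → ℝ // ContDiff ℝ r G ∧ ∀ t x, G (t, x + 1) = G (t, x)}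

noncomputable def famSeq (r : ℕ∞) (q : ℕ) (G : ((Fin q → ℝ) × ℝ) → ℝ) :
    (k : ℕ) → (((Fin q → ℝ) × ℝ) →ᵤ (((Fin q → ℝ) × ℝ) [×k]→L[ℝ] ℝ)) :=
  fun k => UniformFun.ofFun (if (k : ℕ∞) ≤ r then iteratedFDeriv ℝ k G else 0)

/-- The `C^r` topology on the space of `C^r` families. -/
noncomputable instance (r : ℕ∞) (q : ℕ) : TopologicalSpace (FamFun r q) :=
  TopologicalSpace.induced (fun G : FamFun r q => famSeq r q G.1) inferInstance

/-- The member `f_t : ℝ/ℤ → ℝ` of a family, at the parameter `t`. -/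
noncomputable def famMem {r : ℕ∞} {q : ℕ} (G : FamFun r q) (t : Fin q → ℝ) : Circle1 → ℝ :=
  fun z => G.1 (t, rep z)

/-- The product `m_∞` over `ℕ` of Lebesgue measure on `[0,1]`, realised as the pushforward of
the Haar probability measure of the compact group `(ℝ/ℤ)^ℕ` under the coordinatewise choice of
representatives in `[0,1)`. -/
noncomputable def mInfty : Measure (ℕ → ℝ) :=
  Measure.map (fun (t : ℕ → Circle1) (n : ℕ) => rep (t n))
    (MeasureTheory.Measure.addHaarMeasure (⊤ : TopologicalSpace.PositiveCompacts (ℕ → Circle1)))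

/-- `S` is an `N`-dimensionally shy subset of a normed real vector space `V`. -/
def NDimShy {V : Type*} [NormedAddCommGroup V] [NormedSpace ℝ V] (N : ℕ) (S : Set V) : Prop :=
  ∃ φ : Fin N → V, ∀ f : V,
    volume {t : Fin N → ℝ | (∀ i, t i ∈ Set.Icc (0 : ℝ) 1) ∧ f + ∑ i, t i • φ i ∈ S} = 0

/-- `S` is a finite dimensionally shy subset of a normed real vector space `V`. -/
def FinDimShy {V : Type*} [NormedAddCommGroup V] [NormedSpace ℝ V] (S : Set V) : Prop :=
  ∃ N : ℕ, 0 < N ∧ NDimShy N S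

/-- `S` is a shy subset of `V`: there are a compactly supported Borel probability measure `μ`
on `V` and a Borel set `S̃ ⊇ S` all of whose translates are `μ`-null. -/
def IsShy {V : Type*} [NormedAddCommGroup V] [NormedSpace ℝ V] (S : Set V) : Prop :=
  letI : MeasurableSpace V := borel V
  ∃ μ : Measure V, μ Set.univ = 1 ∧ (∃ K : Set V, IsCompact K ∧ μ K = 1) ∧
    ∃ St : Set V, MeasurableSet St ∧ S ⊆ St ∧
      ∀ v : V, μ ((fun x => x + v) ⁻¹' St) = 0

/-- `S` is a prevalent subset of `V`. -/
def IsPrevalent {V : Type*} [NormedAddCommGroup V] [NormedSpace ℝ V] (S : Set V) : Prop :=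
  IsShy Sᶜ

/-- `F` is the (normalized) lift of an orientation-preserving real analytic expanding circle
map of degree `d` fixing `π(0)`. -/
def AnalyticExpandingLift (F : ℝ → ℝ) (d : ℕ) : Prop :=
  (∀ x : ℝ, AnalyticAt ℝ F x) ∧ (∀ x : ℝ, F (x + 1) = F x + d) ∧ StrictMono F ∧ F 0 = 0 ∧
    2 ≤ d ∧ ∃ C > (0 : ℝ), ∃ l > (1 : ℝ), ∀ n : ℕ, 1 ≤ n → ∀ x : ℝ, C * l ^ n ≤ |deriv (F^[n]) x|

/-- The inverse branches `τ_{i,n} = τ_{i_n} ∘ ⋯ ∘ τ_{i_1}`, where `τ = F⁻¹` and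
`τ_i(x) = τ(x+i)`; the word `i` is indexed from `0`, so `i 0` is the first letter `i_1`. -/
noncomputable def tauIter (F : ℝ → ℝ) {d : ℕ} (i : ℕ → Fin d) : ℕ → ℝ → ℝ
  | 0, x => x
  | n + 1, x => Function.invFun F (tauIter F i n x + ((i n : ℕ) : ℝ))

/-- The function `h^f_i` associated to an infinite word `i`. -/
noncomputable def hSum (F : ℝ → ℝ) {d : ℕ} (i : ℕ → Fin d) (f : Circle1 → ℝ) : ℝ → ℝ :=
  fun x => ∑' n : ℕ,
    (f ((tauIter F i (n + 1) x : ℝ) : Circle1) - f ((tauIter F i (n + 1) 0 : ℝ) : Circle1))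

/-- The function `h^f_i` associated to a finite word of length `m` (the first `m` letters
of `i`). -/
noncomputable def hSumFin (F : ℝ → ℝ) {d : ℕ} (i : ℕ → Fin d) (m : ℕ) (f : Circle1 → ℝ) :
    ℝ → ℝ :=
  fun x => ∑ n ∈ Finset.range m,
    (f ((tauIter F i (n + 1) x : ℝ) : Circle1) - f ((tauIter F i (n + 1) 0 : ℝ) : Circle1))

/-- `i ∈ CL(x,K)`: all backward images of `x` along the word `i` lie over `K`. -/
def WordIn (F : ℝ → ℝ) {d : ℕ} (i : ℕ → Fin d) (x : ℝ) (K : Set Circle1) : Prop :=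
  ∀ n : ℕ, 1 ≤ n → ((tauIter F i n x : ℝ) : Circle1) ∈ K

/-- `x` (a real, lying over `K`) is an `f`-supercritical value of `K`. -/
def IsSupercriticalValue (F : ℝ → ℝ) (d : ℕ) (f : Circle1 → ℝ) (K : Set Circle1) (x : ℝ) :
    Prop :=
  ((x : ℝ) : Circle1) ∈ K ∧ ∃ i j : ℕ → Fin d, WordIn F i x K ∧ WordIn F j x K ∧ i 0 ≠ j 0 ∧
    deriv (hSum F i f) x = deriv (hSum F j f) x

/-- `x` is a critical value of `T|K`. -/
def IsCriticalValue (T : Circle1 → Circle1) (K : Set Circle1) (x : Circle1) : Prop :=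
  x ∈ K ∧ ∃ y z, y ∈ K ∧ z ∈ K ∧ y ≠ z ∧ T y = x ∧ T z = x

/-- A critical value `x` of `T|K` is regular: on each side of `x` there is a continuous
inverse branch of `T` selecting the unique preimage in `K`. -/
def IsRegularCriticalValue (T : Circle1 → Circle1) (K : Set Circle1) (x : Circle1) : Prop :=
  ∃ U : Set Circle1, U ∈ 𝓝 x ∧ IsConnected U ∧
    ∀ b ∈ U \ {x}, ∃ s : Circle1 → Circle1,
      ContinuousOn s (connectedComponentIn (U \ {x}) b) ∧
      (∀ y ∈ connectedComponentIn (U \ {x}) b, T (s y) = y) ∧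
      (∀ y ∈ K ∩ connectedComponentIn (U \ {x}) b, T ⁻¹' {y} ∩ K = {s y})

/-- `T|K` is Sturmian-like: every critical value is regular. -/
def SturmianLike (T : Circle1 → Circle1) (K : Set Circle1) : Prop :=
  ∀ x, IsCriticalValue T K x → IsRegularCriticalValue T K x

/-- `f : ℝ/ℤ → ℝ` is a trigonometric polynomial. -/
def IsTrigPoly (f : Circle1 → ℝ) : Prop :=
  ∃ m : ℕ, ∃ a b : ℕ → ℝ, ∀ x : ℝ,
    f ↑x = a 0 + ∑ k ∈ Finset.range m,
      (a (k + 1) * Real.cos (2 * Real.pi * (k + 1) * x) +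
        b (k + 1) * Real.sin (2 * Real.pi * (k + 1) * x))

end


/-! ### Lifts and distances on the circle -/

lemma coe_rep (z : Circle1) : ((rep z : ℝ) : Circle1) = z := AddCircle.coe_equivIco

lemma coe_eq_coe_int {x y : ℝ} (h : (x : Circle1) = y) : ∃ k : ℤ, x = y + k := by
  rw [← sub_eq_zero, ← AddCircle.coe_sub, AddCircle.coe_eq_zero_iff] at h
  obtain ⟨k, hk⟩ := h
  refine ⟨k, ?_⟩
  simp at hk
  linarith

lemma coe_add_int (x : ℝ) (k : ℤ) : ((x + k : ℝ) : Circle1) = x := by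
  rw [← sub_eq_zero, ← AddCircle.coe_sub, AddCircle.coe_eq_zero_iff]
  exact ⟨k, by simp⟩

lemma dist_coe_le (x y : ℝ) : dist (x : Circle1) y ≤ |x - y| := by
  rw [dist_eq_norm, ← AddCircle.coe_sub, UnitAddCircle.norm_eq]
  simpa using round_le (x - y) 0

lemma dist_coe_eq {x y : ℝ} (h : |x - y| ≤ 1 / 2) : dist (x : Circle1) y = |x - y| := by
  rw [dist_eq_norm, ← AddCircle.coe_sub, AddCircle.norm_coe_eq_abs_iff 1 one_ne_zero]
  simpa using h

/-- A point near the projection of `x` has a lift that is equally near to `x`. -/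
lemma exists_lift_near (x : ℝ) (y : Circle1) :
    ∃ t : ℝ, (t : Circle1) = y ∧ |x - t| = dist (x : Circle1) y := by
  refine ⟨rep y + round (x - rep y), ?_, ?_⟩
  · rw [coe_add_int, coe_rep]
  · conv_rhs => rw [← coe_rep y, dist_eq_norm, ← AddCircle.coe_sub, UnitAddCircle.norm_eq]
    congr 1
    ring

/-! ### Uniformly expanding pairs -/

/-- The pair `(f, F)` of a function on the circle and a lift satisfies explicit bounds: distances
under `F^[n]` grow at least like `c * l ^ n`, the lift is `M`-Lipschitz, and `f` is `L`-Lipschitz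
and bounded by `B`.  These bounds hold with common constants on a `C^1`-neighbourhood of any
expanding pair, and they are all that is used about the dynamics. -/
structure Good (c l L M B : ℝ) (f : Circle1 → ℝ) (F : ℝ → ℝ) : Prop where
  hc : 0 < c
  hl : 1 < l
  hL : 0 ≤ L
  hM : 0 ≤ M
  cont : Continuous F
  deg : ∃ d : ℤ, ∀ x, F (x + 1) = F x + d
  expd : ∀ n x y, c * l ^ n * |x - y| ≤ |F^[n] x - F^[n] y|
  lipF : ∀ x y, |F x - F y| ≤ M * |x - y|
  lipf : ∀ x y : ℝ, |f x - f y| ≤ L * |x - y|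
  bdd : ∀ x, |f x| ≤ B

/-- The constant bounding the sum of the backward contraction factors `c⁻¹ * l⁻¹ ^ k`. -/
noncomputable def Acst (c l : ℝ) : ℝ := c⁻¹ * (1 - l⁻¹)⁻¹

/-- Birkhoff sum of `f - b`. -/
noncomputable def bsum (f : Circle1 → ℝ) (T : Circle1 → Circle1) (b : ℝ) (n : ℕ) (z : Circle1) : ℝ :=
  ∑ i ∈ Finset.range n, (f (T^[i] z) - b)

lemma bsum_zero (f : Circle1 → ℝ) (T : Circle1 → Circle1) (b : ℝ) (z : Circle1) :
    bsum f T b 0 z = 0 := by simp [bsum]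

lemma bsum_succ (f : Circle1 → ℝ) (T : Circle1 → Circle1) (b : ℝ) (n : ℕ) (z : Circle1) :
    bsum f T b (n + 1) z = bsum f T b n z + (f (T^[n] z) - b) := by
  rw [bsum, bsum, Finset.sum_range_succ]

lemma bsum_add (f : Circle1 → ℝ) (T : Circle1 → Circle1) (b : ℝ) (m n : ℕ) (z : Circle1) :
    bsum f T b (m + n) z = bsum f T b m z + bsum f T b n (T^[m] z) := by
  simp only [bsum, Finset.sum_range_add, ← Function.iterate_add_apply]
  congr 1
  exact Finset.sum_congr rfl fun i _ => by rw [add_comm m i]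

lemma bsum_change (f : Circle1 → ℝ) (T : Circle1 → Circle1) (b b' : ℝ) (n : ℕ) (z : Circle1) :
    bsum f T b n z = bsum f T b' n z + n * (b' - b) := by
  simp only [bsum, Finset.sum_sub_distrib]
  simp
  ring

/-- If `b` is a real number with `g + f - b ≤ g ∘ T`, Birkhoff sums of `f - b` are bounded by
increments of `g`. -/
lemma bsum_le_of_sub {f : Circle1 → ℝ} {T : Circle1 → Circle1} {b : ℝ} {g : Circle1 → ℝ}
    (h : ∀ x, g x + f x - b ≤ g (T x)) (n : ℕ) (z : Circle1) :
    bsum f T b n z ≤ g (T^[n] z) - g z := by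
  induction n with
  | zero => simp [bsum]
  | succ n ih =>
    rw [bsum_succ, Function.iterate_succ_apply']
    linarith [h (T^[n] z)]

lemma Acst_pos {c l : ℝ} (hc : 0 < c) (hl : 1 < l) : 0 < Acst c l := by
  have : l⁻¹ < 1 := inv_lt_one_of_one_lt₀ hl
  have : 0 < 1 - l⁻¹ := by linarith
  unfold Acst
  positivity

namespace Good

variable {c l L M B : ℝ} {f : Circle1 → ℝ} {F : ℝ → ℝ}

lemma A_pos (G : Good c l L M B f F) : 0 < Acst c l := Acst_pos G.hc G.hl

lemma r_pos (G : Good c l L M B f F) : 0 < l⁻¹ := inv_pos.2 (by linarith [G.hl])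

lemma r_lt (G : Good c l L M B f F) : l⁻¹ < 1 := inv_lt_one_of_one_lt₀ G.hl

lemma back (G : Good c l L M B f F) {i n : ℕ} (h : i ≤ n) (x y : ℝ) :
    |F^[i] x - F^[i] y| ≤ c⁻¹ * l⁻¹ ^ (n - i) * |F^[n] x - F^[n] y| := by
  have h1 := G.expd (n - i) (F^[i] x) (F^[i] y)
  rw [← Function.iterate_add_apply, ← Function.iterate_add_apply, Nat.sub_add_cancel h] at h1
  have hc := G.hc
  have hl : 0 < l := by linarith [G.hl]
  have : 0 < c * l ^ (n - i) := by positivity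
  have h2 : |F^[i] x - F^[i] y| ≤ (c * l ^ (n - i))⁻¹ * |F^[n] x - F^[n] y| := by
    rw [inv_mul_eq_div, le_div_iff₀ this]
    linarith
  rwa [mul_inv, ← inv_pow] at h2

lemma coef_le (G : Good c l L M B f F) (k : ℕ) : c⁻¹ * l⁻¹ ^ k ≤ Acst c l := by
  have h1 : l⁻¹ ^ k ≤ 1 := pow_le_one₀ G.r_pos.le G.r_lt.le
  have h2 : 1 ≤ (1 - l⁻¹)⁻¹ :=
    (one_le_inv₀ (by linarith [G.r_lt])).2 (by linarith [G.r_pos])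
  have := inv_pos.2 G.hc
  unfold Acst
  gcongr
  linarith

lemma back' (G : Good c l L M B f F) {i n : ℕ} (h : i ≤ n) (x y : ℝ) :
    |F^[i] x - F^[i] y| ≤ Acst c l * |F^[n] x - F^[n] y| :=
  (G.back h x y).trans (by gcongr; exact G.coef_le _)

lemma back_sum (G : Good c l L M B f F) (n : ℕ) (x y : ℝ) :
    ∑ i ∈ Finset.range n, |F^[i] x - F^[i] y| ≤ Acst c l * |F^[n] x - F^[n] y| := by
  have hgeo : ∑ i ∈ Finset.range n, l⁻¹ ^ (n - i) ≤ (1 - l⁻¹)⁻¹ := by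
    have e : ∑ i ∈ Finset.range n, l⁻¹ ^ (n - i) = ∑ i ∈ Finset.range n, l⁻¹ ^ (i + 1) := by
      rw [← Finset.sum_range_reflect]
      refine Finset.sum_congr rfl fun i hi => ?_
      have := Finset.mem_range.1 hi
      congr 1
      omega
    rw [e, ← tsum_geometric_of_lt_one G.r_pos.le G.r_lt]
    have hs := summable_geometric_of_lt_one G.r_pos.le G.r_lt
    calc ∑ i ∈ Finset.range n, l⁻¹ ^ (i + 1) ≤ ∑ i ∈ Finset.range n, l⁻¹ ^ i :=
          Finset.sum_le_sum fun i _ => pow_le_pow_of_le_one G.r_pos.le G.r_lt.le (by omega)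
      _ ≤ _ := hs.sum_le_tsum _ fun i _ => by have := G.r_pos; positivity
  calc ∑ i ∈ Finset.range n, |F^[i] x - F^[i] y|
      ≤ ∑ i ∈ Finset.range n, c⁻¹ * l⁻¹ ^ (n - i) * |F^[n] x - F^[n] y| :=
        Finset.sum_le_sum fun i hi => G.back (Finset.mem_range.1 hi).le x y
    _ = c⁻¹ * (∑ i ∈ Finset.range n, l⁻¹ ^ (n - i)) * |F^[n] x - F^[n] y| := by
        rw [Finset.mul_sum, Finset.sum_mul]
    _ ≤ _ := by
        unfold Acst
        have := inv_pos.2 G.hc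
        gcongr

lemma map_add_int (G : Good c l L M B f F) :
    ∃ d : ℤ, ∀ x (k : ℤ), F (x + k) = F x + (d * k : ℤ) := by
  obtain ⟨d, hd⟩ := G.deg
  refine ⟨d, fun x k => ?_⟩
  induction k using Int.induction_on with
  | zero => simp
  | succ k ih =>
    have := hd (x + k)
    push_cast at ih ⊢
    rw [← add_assoc, this, ih]
    ring
  | pred k ih =>
    have := hd (x + (-k - 1))
    push_cast at ih ⊢
    have e : x + (-(k : ℝ) - 1) + 1 = x + -k := by ring
    rw [e, ih] at this
    linarith

lemma cmap_coe (G : Good c l L M B f F) (x : ℝ) : cmap F (x : Circle1) = (F x : ℝ) := by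
  obtain ⟨d, hd⟩ := G.map_add_int
  obtain ⟨k, hk⟩ := coe_eq_coe_int (coe_rep (x : Circle1))
  unfold cmap
  rw [hk, hd, coe_add_int]

lemma iter_coe (G : Good c l L M B f F) (n : ℕ) (x : ℝ) :
    (cmap F)^[n] (x : Circle1) = (F^[n] x : ℝ) := by
  induction n with
  | zero => rfl
  | succ n ih => rw [Function.iterate_succ_apply', ih, G.cmap_coe, Function.iterate_succ_apply']

lemma iter_add_int (G : Good c l L M B f F) (n : ℕ) :
    ∃ d : ℤ, ∀ x (k : ℤ), F^[n] (x + k) = F^[n] x + (d * k : ℤ) := by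
  obtain ⟨d, hd⟩ := G.map_add_int
  induction n with
  | zero => exact ⟨1, fun x k => by simp⟩
  | succ n ih =>
    obtain ⟨e, he⟩ := ih
    refine ⟨d * e, fun x k => ?_⟩
    rw [Function.iterate_succ_apply', he, hd, Function.iterate_succ_apply', mul_assoc]

/-- Expansion forces the degree of every positive iterate to be at least `2` in absolute
value. -/
lemma deg_ge (G : Good c l L M B f F) {n : ℕ} (hn : 1 ≤ n) :
    ∃ d : ℤ, 2 ≤ |d| ∧ ∀ x (k : ℤ), F^[n] (x + k) = F^[n] x + (d * k : ℤ) := by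
  obtain ⟨d, hd⟩ := G.iter_add_int n
  refine ⟨d, ?_, hd⟩
  by_contra hcon
  have hd1 : |d| ≤ 1 := by omega
  -- otherwise the degrees of the iterates of `F^[n]` stay bounded, against exponential growth
  have key : ∀ j : ℕ, |F^[n * j] 1 - F^[n * j] 0| ≤ 1 := by
    intro j
    have : ∃ e : ℤ, |e| ≤ 1 ∧ F^[n * j] 1 = F^[n * j] 0 + e := by
      induction j with
      | zero => exact ⟨1, by simp⟩
      | succ j ih =>
        obtain ⟨e, he, h⟩ := ih
        refine ⟨d * e, ?_, ?_⟩
        · rw [abs_mul]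
          nlinarith [abs_nonneg d, abs_nonneg e]
        · rw [Nat.mul_succ, add_comm, Function.iterate_add_apply, h, hd,
            Function.iterate_add_apply]
    obtain ⟨e, he, h⟩ := this
    rw [h]
    simp only [add_sub_cancel_left]
    exact_mod_cast he
  obtain ⟨j, hj⟩ := pow_unbounded_of_one_lt c⁻¹ G.hl
  have h1 := G.expd (n * j) 1 0
  have h2 : l ^ j ≤ l ^ (n * j) := pow_le_pow_right₀ G.hl.le (by nlinarith)
  have h3 : 1 < c * l ^ j := by
    have := mul_lt_mul_of_pos_left hj G.hc
    rwa [mul_inv_cancel₀ G.hc.ne'] at this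
  have h4 := mul_le_mul_of_nonneg_left h2 G.hc.le
  have := key j
  simp at h1
  linarith

lemma surj (G : Good c l L M B f F) : Function.Surjective F := by
  obtain ⟨d, hd2, hd⟩ := G.deg_ge le_rfl
  simp only [Function.iterate_one] at hd
  intro y
  apply mem_range_of_exists_le_of_exists_ge G.cont
  · obtain ⟨k, hk⟩ := exists_int_lt (y - F 0)
    rcases le_or_gt 0 d with h | h
    · refine ⟨0 + ((-|k| : ℤ) : ℝ), ?_⟩
      rw [hd]
      have : d * (-|k|) ≤ k := by
        rw [abs_of_nonneg h] at hd2
        nlinarith [neg_abs_le k, abs_nonneg k]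
      have : ((d * (-|k|) : ℤ) : ℝ) ≤ k := by exact_mod_cast this
      linarith
    · refine ⟨0 + ((|k| : ℤ) : ℝ), ?_⟩
      rw [hd]
      have : d * (|k|) ≤ k := by
        rw [abs_of_neg h] at hd2
        nlinarith [neg_abs_le k, abs_nonneg k]
      have : ((d * (|k|) : ℤ) : ℝ) ≤ k := by exact_mod_cast this
      linarith
  · obtain ⟨k, hk⟩ := exists_int_gt (y - F 0)
    rcases le_or_gt 0 d with h | h
    · refine ⟨0 + ((|k| : ℤ) : ℝ), ?_⟩
      rw [hd]
      have : k ≤ d * (|k|) := by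
        rw [abs_of_nonneg h] at hd2
        nlinarith [le_abs_self k, abs_nonneg k]
      have : (k : ℝ) ≤ ((d * (|k|) : ℤ) : ℝ) := by exact_mod_cast this
      linarith
    · refine ⟨0 + ((-|k| : ℤ) : ℝ), ?_⟩
      rw [hd]
      have : k ≤ d * (-|k|) := by
        rw [abs_of_neg h] at hd2
        nlinarith [le_abs_self k, abs_nonneg k]
      have : (k : ℝ) ≤ ((d * (-|k|) : ℤ) : ℝ) := by exact_mod_cast this
      linarith

lemma bsum_coe (G : Good c l L M B f F) (b : ℝ) (n : ℕ) (x : ℝ) :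
    bsum f (cmap F) b n x = ∑ i ∈ Finset.range n, (f (F^[i] x : ℝ) - b) :=
  Finset.sum_congr rfl fun i _ => by rw [G.iter_coe]

lemma bsum_sub_le (G : Good c l L M B f F) (b : ℝ) (n : ℕ) (x y : ℝ) :
    |bsum f (cmap F) b n x - bsum f (cmap F) b n y| ≤
      L * Acst c l * |F^[n] x - F^[n] y| := by
  rw [G.bsum_coe, G.bsum_coe, ← Finset.sum_sub_distrib]
  calc _ ≤ ∑ i ∈ Finset.range n, L * |F^[i] x - F^[i] y| := by
        refine (Finset.abs_sum_le_sum_abs _ _).trans (Finset.sum_le_sum fun i _ => ?_)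
        rw [sub_sub_sub_cancel_right]
        exact G.lipf _ _
    _ = L * ∑ i ∈ Finset.range n, |F^[i] x - F^[i] y| := by rw [Finset.mul_sum]
    _ ≤ _ := by
        rw [mul_assoc]
        exact mul_le_mul_of_nonneg_left (G.back_sum n x y) G.hL

lemma lip_cmap (G : Good c l L M B f F) (x y : Circle1) :
    dist (cmap F x) (cmap F y) ≤ M * dist x y := by
  obtain ⟨t, rfl, h⟩ := exists_lift_near (rep x) y
  conv_lhs => rw [← coe_rep x]
  rw [G.cmap_coe, G.cmap_coe]
  rw [coe_rep] at h
  rw [← h]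
  exact (dist_coe_le _ _).trans (G.lipF _ _)

lemma cont_cmap (G : Good c l L M B f F) : Continuous (cmap F) :=
  (LipschitzWith.of_dist_le' G.lip_cmap).continuous

lemma lip_f (G : Good c l L M B f F) (x y : Circle1) : |f x - f y| ≤ L * dist x y := by
  obtain ⟨t, rfl, h⟩ := exists_lift_near (rep x) y
  conv_lhs => rw [← coe_rep x]
  rw [coe_rep] at h
  rw [← h]
  exact G.lipf _ _

lemma cont_f (G : Good c l L M B f F) : Continuous f :=
  (LipschitzWith.of_dist_le' G.lip_f).continuous

lemma cont_bsum (G : Good c l L M B f F) (b : ℝ) (n : ℕ) :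
    Continuous (bsum f (cmap F) b n) := by
  unfold bsum
  exact continuous_finsetSum _ fun i _ =>
    (G.cont_f.comp (G.cont_cmap.iterate i)).sub continuous_const

/-- Every orbit segment of length `n` is shadowed by a point of period `n`, up to an error at its
endpoint bounded independently of `n`. -/
lemma exists_periodic (G : Good c l L M B f F) {n : ℕ} (hn : 1 ≤ n) (x : ℝ) :
    ∃ z : ℝ, ∃ k : ℤ, F^[n] z = z + k ∧ |F^[n] z - F^[n] x| ≤ 4 := by
  obtain ⟨d, hd2, hd⟩ := G.deg_ge hn
  have hcont : Continuous (F^[n]) := G.cont.iterate n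
  have h1 : F^[n] (x + 1) = F^[n] x + d := by simpa using hd x 1
  obtain ⟨s, hs, hsd⟩ : ∃ s : ℝ, (s = 2 ∨ s = -2) ∧
      F^[n] x + s ∈ uIcc (F^[n] x) (F^[n] (x + 1)) := by
    rcases le_or_gt 0 d with h | h
    · rw [abs_of_nonneg h] at hd2
      have : (2 : ℝ) ≤ d := by exact_mod_cast hd2
      exact ⟨2, Or.inl rfl, by rw [h1, mem_uIcc]; left; constructor <;> linarith⟩
    · rw [abs_of_neg h] at hd2
      have : (2 : ℝ) ≤ -d := by exact_mod_cast hd2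
      exact ⟨-2, Or.inr rfl, by rw [h1, mem_uIcc]; right; constructor <;> linarith⟩
  obtain ⟨w, hw, hwx⟩ := intermediate_value_uIcc hcont.continuousOn hsd
  rw [uIcc_of_le (by linarith)] at hw
  obtain ⟨hw1, hw2⟩ := hw
  -- the displacement changes by at least `1` between `x` and `w`, so it takes an integer value
  set h : ℝ → ℝ := fun t => F^[n] t - t with hh
  have hhc : Continuous h := hcont.sub continuous_id
  have hdiff : h w - h x = s - (w - x) := by simp only [hh]; rw [hwx]; ring
  obtain ⟨k, hk⟩ : ∃ k : ℤ, (k : ℝ) ∈ uIcc (h x) (h w) := by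
    rcases hs with rfl | rfl
    · refine ⟨⌈h x⌉, ?_⟩
      rw [mem_uIcc]; left
      exact ⟨Int.le_ceil _, by linarith [Int.ceil_lt_add_one (h x)]⟩
    · refine ⟨⌈h w⌉, ?_⟩
      rw [mem_uIcc]; right
      exact ⟨Int.le_ceil _, by linarith [Int.ceil_lt_add_one (h w)]⟩
  obtain ⟨z, hz, hzk⟩ := intermediate_value_uIcc hhc.continuousOn hk
  rw [uIcc_of_le hw1] at hz
  obtain ⟨hz1, hz2⟩ := hz
  have hzk' : F^[n] z = z + k := by
    have : F^[n] z - z = k := hzk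
    linarith
  refine ⟨z, k, hzk', ?_⟩
  have hx : h x = F^[n] x - x := rfl
  rw [hzk', abs_le]
  rw [mem_uIcc] at hk
  rcases hs with rfl | rfl <;> rcases hk with hk | hk <;> constructor <;> linarith [hk.1, hk.2]

/-- Closing lemma: an orbit segment whose endpoints are close is shadowed by a periodic orbit. -/
lemma closing (G : Good c l L M B f F) (b : ℝ) {n : ℕ} (hn : 1 ≤ n) (z : Circle1) {δ : ℝ}
    (hδ : dist ((cmap F)^[n] z) z ≤ δ) :
    ∃ q : Circle1, (cmap F)^[n] q = q ∧
      (∀ i ≤ n, dist ((cmap F)^[i] q) ((cmap F)^[i] z) ≤ Acst c l * (Acst c l * δ)) ∧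
      |bsum f (cmap F) b n q - bsum f (cmap F) b n z| ≤ L * Acst c l * (Acst c l * δ) := by
  have hsurj : Function.Surjective (F^[n]) := G.surj.iterate n
  obtain ⟨y, rfl⟩ : ∃ y : ℝ, (y : Circle1) = z := ⟨_, coe_rep z⟩
  rw [G.iter_coe, dist_comm] at hδ
  -- `x` is a lift of the endpoint that is `δ`-close to `y`
  obtain ⟨x, hx, hxy⟩ := exists_lift_near y (F^[n] y : ℝ)
  obtain ⟨k, hk⟩ := coe_eq_coe_int hx.symm
  choose φ hφ using fun t : ℝ => hsurj (t + k)
  have hφ_iter : ∀ j t s, |φ^[j] t - φ^[j] s| ≤ c⁻¹ * l⁻¹ ^ (n * j) * |t - s| := by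
    intro j t s
    have h1 : ∀ t s, F^[n * j] (φ^[j] t) - F^[n * j] (φ^[j] s) = t - s := by
      obtain ⟨d, hd⟩ := G.iter_add_int n
      have : ∃ e : ℤ, ∀ t, F^[n * j] (φ^[j] t) = t + e := by
        induction j with
        | zero => exact ⟨0, by simp⟩
        | succ j ih =>
          obtain ⟨e, he⟩ := ih
          obtain ⟨d', hd'⟩ := G.iter_add_int (n * j)
          refine ⟨e + d' * k, fun t => ?_⟩
          rw [Nat.mul_succ, Function.iterate_add_apply, Function.iterate_succ_apply', hφ, hd', he]
          push_cast
          ring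
      obtain ⟨e, he⟩ := this
      intro t s
      rw [he, he]
      ring
    have := G.back (Nat.zero_le (n * j)) (φ^[j] t) (φ^[j] s)
    rwa [h1] at this
  have hφx : φ x = y := by
    have h0 := G.back (Nat.zero_le n) (φ x) y
    rw [hφ, hk] at h0
    simp at h0
    linarith
  -- the iterates `φ^[j] x` converge geometrically to a fixed point of `φ`
  have hgeo : ∀ j, dist (φ^[j] x) (φ^[j + 1] x) ≤ c⁻¹ * δ * l⁻¹ ^ j := by
    intro j
    rw [Function.iterate_succ_apply, Real.dist_eq, hφx]
    refine (hφ_iter j x y).trans ?_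
    rw [abs_sub_comm, hxy]
    have h1 : l⁻¹ ^ (n * j) ≤ l⁻¹ ^ j := pow_le_pow_of_le_one G.r_pos.le G.r_lt.le (by nlinarith)
    have hc := inv_pos.2 G.hc
    have hr := G.r_pos
    calc _ ≤ c⁻¹ * l⁻¹ ^ j * δ := by gcongr
      _ = _ := by ring
  obtain ⟨q, hq⟩ := cauchySeq_tendsto_of_complete (cauchySeq_of_le_geometric _ _ G.r_lt hgeo)
  have hqx := dist_le_of_le_geometric_of_tendsto₀ _ _ G.r_lt hgeo hq
  have hφc : Continuous φ := by
    refine (LipschitzWith.of_dist_le' (K := c⁻¹ * l⁻¹ ^ (n * 1)) fun t s => ?_).continuous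
    simpa [Real.dist_eq] using hφ_iter 1 t s
  have hfix : φ q = q := by
    refine isFixedPt_of_tendsto_iterate hq hφc.continuousAt
  have hFq : F^[n] q = q + k := by simpa [hfix] using hφ q
  have hend : |F^[n] q - F^[n] y| ≤ Acst c l * δ := by
    rw [hFq, hk, add_sub_add_right_eq_sub, abs_sub_comm]
    rw [Real.dist_eq] at hqx
    refine hqx.trans (le_of_eq ?_)
    unfold Acst
    rw [div_eq_mul_inv]
    ring
  refine ⟨q, ?_, fun i hi => ?_, ?_⟩
  · rw [G.iter_coe, hFq, coe_add_int]
  · rw [G.iter_coe, G.iter_coe]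
    refine (dist_coe_le _ _).trans ((G.back' hi q y).trans ?_)
    exact mul_le_mul_of_nonneg_left hend G.A_pos.le
  · refine (G.bsum_sub_le b n q y).trans ?_
    exact mul_le_mul_of_nonneg_left hend (mul_nonneg G.hL G.A_pos.le)

/-! ### The maximal average and a sub-action -/

lemma integral_le (G : Good c l L M B f F) {μ : Measure Circle1} (hμ : InvProb (cmap F) μ) :
    |∫ x, f x ∂μ| ≤ B := by
  have := hμ.1
  simpa using norm_integral_le_of_norm_le_const (μ := μ) (f := f) (C := B)
    (Eventually.of_forall fun x => by simpa using G.bdd x)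

lemma bddAbove_integrals (G : Good c l L M B f F) :
    BddAbove ((fun μ : Measure Circle1 => ∫ x, f x ∂μ) '' {μ | InvProb (cmap F) μ}) := by
  refine ⟨B, ?_⟩
  rintro _ ⟨μ, hμ, rfl⟩
  exact (abs_le.1 (G.integral_le hμ)).2

/-- A periodic orbit carries an invariant probability measure, integrating `f` to the orbit
average. -/
lemma exists_periodic_measure (G : Good c l L M B f F) {n : ℕ} (hn : 1 ≤ n) {z : Circle1}
    (hz : (cmap F)^[n] z = z) :
    ∃ μ : Measure Circle1, InvProb (cmap F) μ ∧
      ∫ x, f x ∂μ = (n : ℝ)⁻¹ * ∑ i ∈ Finset.range n, f ((cmap F)^[i] z) := by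
  have hT : Measurable (cmap F) := G.cont_cmap.measurable
  have hn0 : (n : ENNReal) ≠ 0 := by exact_mod_cast (by omega : n ≠ 0)
  refine ⟨(n : ENNReal)⁻¹ • ∑ i ∈ Finset.range n, Measure.dirac ((cmap F)^[i] z), ⟨⟨?_⟩, ?_⟩, ?_⟩
  · simp [ENNReal.inv_mul_cancel hn0]
  · rw [Measure.map_smul]
    congr 1
    rw [← Measure.mapₗ_apply_of_measurable hT, map_sum]
    simp only [Measure.mapₗ_apply_of_measurable hT, Measure.map_dirac' hT]
    obtain ⟨m, rfl⟩ : ∃ m, n = m + 1 := ⟨n - 1, by omega⟩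
    rw [Finset.sum_range_succ, Finset.sum_range_succ' (fun i => Measure.dirac ((cmap F)^[i] z))]
    congr 1
    · exact Finset.sum_congr rfl fun i _ => by rw [Function.iterate_succ_apply']
    · rw [← Function.iterate_succ_apply' (cmap F), hz]
      rfl
  · rw [integral_smul_measure, integral_finsetSum_measure]
    · simp
    · intro i _
      exact integrable_dirac (by simp)

lemma invProb_nonempty (G : Good c l L M B f F) : ∃ μ, InvProb (cmap F) μ := by
  obtain ⟨z, k, hz, -⟩ := G.exists_periodic le_rfl 0
  obtain ⟨μ, h, -⟩ := G.exists_periodic_measure (n := 1) (z := z) le_rfl (by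
    rw [G.iter_coe, hz, coe_add_int])
  exact ⟨μ, h⟩

lemma abs_beta_le (G : Good c l L M B f F) : |beta f (cmap F)| ≤ B := by
  obtain ⟨μ, hμ⟩ := G.invProb_nonempty
  rw [abs_le]
  constructor
  · exact (abs_le.1 (G.integral_le hμ)).1.trans (le_csSup G.bddAbove_integrals ⟨μ, hμ, rfl⟩)
  · refine csSup_le ⟨_, μ, hμ, rfl⟩ ?_
    rintro _ ⟨ν, hν, rfl⟩
    exact (abs_le.1 (G.integral_le hν)).2

lemma bsum_periodic_nonpos (G : Good c l L M B f F) {n : ℕ} (hn : 1 ≤ n) {z : Circle1}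
    (hz : (cmap F)^[n] z = z) : bsum f (cmap F) (beta f (cmap F)) n z ≤ 0 := by
  obtain ⟨μ, hμ, h⟩ := G.exists_periodic_measure hn hz
  have h1 : ∫ x, f x ∂μ ≤ beta f (cmap F) := le_csSup G.bddAbove_integrals ⟨μ, hμ, rfl⟩
  have hn' : (0 : ℝ) < n := by exact_mod_cast hn
  rw [h, inv_mul_le_iff₀ hn'] at h1
  simp only [bsum, Finset.sum_sub_distrib]
  simp
  linarith

/-- Birkhoff sums of `f - β` are bounded above independently of their length. -/
lemma bsum_le (G : Good c l L M B f F) (n : ℕ) (z : Circle1) :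
    bsum f (cmap F) (beta f (cmap F)) n z ≤ L * Acst c l * 4 := by
  have hLA : 0 ≤ L * Acst c l := mul_nonneg G.hL G.A_pos.le
  rcases Nat.eq_zero_or_pos n with rfl | hn
  · rw [bsum_zero]
    linarith
  · rw [← coe_rep z]
    obtain ⟨w, k, hw, hwz⟩ := G.exists_periodic hn (rep z)
    have h1 := G.bsum_sub_le (beta f (cmap F)) n w (rep z)
    have h2 := G.bsum_periodic_nonpos (z := w) hn (by rw [G.iter_coe, hw, coe_add_int])
    have h3 := mul_le_mul_of_nonneg_left hwz hLA
    linarith [(abs_le.1 h1).1]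

lemma exists_bsum_nonneg (G : Good c l L M B f F) (n : ℕ) :
    ∃ x, 0 ≤ bsum f (cmap F) (beta f (cmap F)) n x := by
  rcases Nat.eq_zero_or_pos n with rfl | hn
  · exact ⟨0, by rw [bsum_zero]⟩
  obtain ⟨x, -, hx⟩ := isCompact_univ.exists_isMaxOn univ_nonempty
    (G.cont_bsum (beta f (cmap F)) n).continuousOn
  refine ⟨x, ?_⟩
  have hn' : (0 : ℝ) < n := by exact_mod_cast hn
  set S := bsum f (cmap F) (beta f (cmap F)) n x with hS
  suffices beta f (cmap F) ≤ beta f (cmap F) + S / n by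
    have : 0 ≤ S / n := by linarith
    have := mul_nonneg this hn'.le
    rwa [div_mul_cancel₀ _ hn'.ne'] at this
  obtain ⟨μ₀, hμ₀⟩ := G.invProb_nonempty
  refine csSup_le ⟨_, μ₀, hμ₀, rfl⟩ ?_
  rintro _ ⟨μ, hμ, rfl⟩
  have := hμ.1
  have hT : MeasurePreserving (cmap F) μ μ := ⟨G.cont_cmap.measurable, hμ.2⟩
  have hIntegrable : ∀ h : Circle1 → ℝ, Continuous h → Integrable h μ := fun h hh =>
    hh.integrable_of_hasCompactSupport (HasCompactSupport.of_compactSpace h)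
  have hterm : ∀ i, ∫ y, f ((cmap F)^[i] y) ∂μ = ∫ y, f y ∂μ := by
    intro i
    have h1 := (hT.iterate i).map_eq
    conv_rhs => rw [← h1]
    rw [integral_map (hT.iterate i).measurable.aemeasurable G.cont_f.aestronglyMeasurable]
  have h1 : ∫ y, bsum f (cmap F) (beta f (cmap F)) n y ∂μ =
      n * (∫ y, f y ∂μ - beta f (cmap F)) := by
    simp only [bsum]
    rw [integral_finsetSum _ fun i _ => hIntegrable (fun y => f ((cmap F)^[i] y) - beta f (cmap F))
      ((G.cont_f.comp (G.cont_cmap.iterate i)).sub continuous_const)]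
    have : ∀ i ∈ Finset.range n, ∫ y, (f ((cmap F)^[i] y) - beta f (cmap F)) ∂μ =
        ∫ y, f y ∂μ - beta f (cmap F) := by
      intro i _
      rw [integral_sub (hIntegrable (fun y => f ((cmap F)^[i] y)) (G.cont_f.comp (G.cont_cmap.iterate i)))
        (integrable_const _), hterm]
      simp
    rw [Finset.sum_congr rfl this, Finset.sum_const, Finset.card_range, nsmul_eq_mul]
  have h2 : ∫ y, bsum f (cmap F) (beta f (cmap F)) n y ∂μ ≤ ∫ _, S ∂μ :=
    integral_mono (hIntegrable _ (G.cont_bsum _ n)) (integrable_const _) fun y => hx (mem_univ y)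
  rw [h1] at h2
  simp at h2
  have h3 : ∫ y, f y ∂μ - beta f (cmap F) ≤ S / n := by
    rw [le_div_iff₀ hn']
    linarith
  simp only
  linarith

/-- A Lipschitz sub-action with explicit bounds: the supremum of all Birkhoff sums of `f - β`
over orbit segments ending at the given point. -/
lemma exists_subaction (G : Good c l L M B f F) :
    ∃ g : Circle1 → ℝ, (∀ x, 0 ≤ g x) ∧ (∀ x, g x ≤ L * Acst c l * 4) ∧
      (∀ x y, g x - g y ≤ L * Acst c l * dist x y) ∧
      ∀ x, g x + f x - beta f (cmap F) ≤ g (cmap F x) := by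
  set b := beta f (cmap F) with hb
  let V : Circle1 → Set ℝ := fun x => {s | ∃ n z, (cmap F)^[n] z = x ∧ s = bsum f (cmap F) b n z}
  have hV0 : ∀ x, (0 : ℝ) ∈ V x := fun x => ⟨0, x, rfl, by rw [bsum_zero]⟩
  have hVb : ∀ x, BddAbove (V x) := by
    refine fun x => ⟨L * Acst c l * 4, ?_⟩
    rintro _ ⟨n, z, -, rfl⟩
    exact G.bsum_le n z
  refine ⟨fun x => sSup (V x), fun x => le_csSup (hVb x) (hV0 x), fun x => ?_, fun x y => ?_,
    fun x => ?_⟩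
  · refine csSup_le ⟨0, hV0 x⟩ ?_
    rintro _ ⟨n, z, -, rfl⟩
    exact G.bsum_le n z
  · rw [sub_le_iff_le_add]
    refine csSup_le ⟨0, hV0 x⟩ ?_
    rintro _ ⟨n, z, hz, rfl⟩
    rw [← coe_rep z, G.iter_coe] at hz
    obtain ⟨t, rfl, ht⟩ := exists_lift_near (F^[n] (rep z)) y
    obtain ⟨w, hw⟩ := G.surj.iterate n t
    have h1 := G.bsum_sub_le b n (rep z) w
    rw [hw, ht, hz, coe_rep] at h1
    have h2 : bsum f (cmap F) b n w ≤ sSup (V t) :=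
      le_csSup (hVb _) ⟨n, w, by rw [G.iter_coe, hw], rfl⟩
    linarith [(abs_le.1 h1).2]
  · suffices sSup (V x) ≤ sSup (V (cmap F x)) - (f x - b) by
      simp only
      linarith
    refine csSup_le ⟨0, hV0 x⟩ ?_
    rintro _ ⟨n, z, hz, rfl⟩
    rw [le_sub_iff_add_le]
    refine le_csSup (hVb _) ⟨n + 1, z, ?_, ?_⟩
    · rw [Function.iterate_succ_apply', hz]
    · rw [bsum_succ, hz]

/-! ### The non-wandering set -/

/-- A point is non-wandering if it is accumulated by periodic orbits that almost maximize `f`. -/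
lemma mem_Omega_of_periodic (G : Good c l L M B f F) {x : Circle1}
    (h : ∀ ε > 0, ∃ n, 1 ≤ n ∧ ∃ q, (cmap F)^[n] q = q ∧ dist q x < ε ∧
      -ε < bsum f (cmap F) (beta f (cmap F)) n q) : x ∈ OmegaSet f (cmap F) := by
  intro ε hε
  have hA := G.A_pos
  have hL := G.hL
  set D := 2 + Acst c l + L * Acst c l with hD
  have hLA : 0 ≤ L * Acst c l := mul_nonneg hL hA.le
  have hDpos : 0 < D := by linarith
  obtain ⟨n, hn, q, hq, hqx, hs⟩ := h (ε / D) (by positivity)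
  set δ := ε / D with hδ
  have hδε : δ * D = ε := by rw [hδ]; field_simp
  have hδ0 : 0 < δ := by rw [hδ]; positivity
  have hup := G.bsum_periodic_nonpos hn hq
  rw [← coe_rep q] at hq hqx hs hup
  rw [G.iter_coe] at hq
  rw [← hq] at hqx
  obtain ⟨t, rfl, ht⟩ := exists_lift_near (F^[n] (rep q)) x
  obtain ⟨w, hw⟩ := G.surj.iterate n t
  have h1 := G.bsum_sub_le (beta f (cmap F)) n (rep q) w
  have h2 := G.back' (Nat.zero_le n) (rep q) w
  rw [hw, ht] at h1 h2
  have h3 : L * Acst c l * dist ((F^[n] (rep q) : ℝ) : Circle1) t ≤ L * Acst c l * δ :=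
    mul_le_mul_of_nonneg_left hqx.le hLA
  have h4 : Acst c l * dist ((F^[n] (rep q) : ℝ) : Circle1) t ≤ Acst c l * δ :=
    mul_le_mul_of_nonneg_left hqx.le hA.le
  refine ⟨n, hn, w, by rw [G.iter_coe, hw], ?_, ?_⟩
  · have h5 := dist_coe_le w (rep q)
    have h6 := dist_triangle (w : Circle1) (rep q : ℝ) t
    rw [hq] at hqx
    simp only [Function.iterate_zero, id_eq] at h2
    rw [abs_sub_comm] at h5
    have : 0 ≤ L * Acst c l * δ := by positivity
    calc _ < Acst c l * δ + δ := by linarith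
      _ ≤ ε := by rw [← hδε, hD]; linarith
  · change |bsum f (cmap F) (beta f (cmap F)) n w| < ε
    have : 0 < Acst c l * δ := by positivity
    rw [abs_lt]
    have h7 := abs_le.1 h1
    constructor <;> rw [← hδε, hD] <;> linarith [h7.1, h7.2]

lemma periodic_of_mem_Omega (G : Good c l L M B f F) {x : Circle1}
    (hx : x ∈ OmegaSet f (cmap F)) {ε : ℝ} (hε : 0 < ε) : ∃ n, 1 ≤ n ∧ ∃ q,
      (cmap F)^[n] q = q ∧ dist q x < ε ∧ -ε < bsum f (cmap F) (beta f (cmap F)) n q := by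
  have hA := G.A_pos
  have hL := G.hL
  have hLA : 0 ≤ L * Acst c l * Acst c l := by positivity
  set D := 2 + Acst c l * Acst c l + L * Acst c l * Acst c l with hD
  have hA2 : 0 < Acst c l * Acst c l := by positivity
  have hDpos : 0 < D := by linarith
  set δ := ε / D with hδ
  have hδε : δ * D = ε := by rw [hδ]; field_simp
  have hδ0 : 0 < δ := by rw [hδ]; positivity
  obtain ⟨n, hn, z, hz, hzx, hs⟩ := hx δ hδ0
  obtain ⟨q, hq, h1, h2⟩ := G.closing (beta f (cmap F)) hn z (δ := δ) (by
    rw [hz, dist_comm]; exact hzx.le)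
  have h3 := h1 n le_rfl
  rw [hq, hz] at h3
  have hs' : |bsum f (cmap F) (beta f (cmap F)) n z| < δ := hs
  have h4 : 0 < Acst c l * Acst c l * δ := by positivity
  have h5 : 0 ≤ L * Acst c l * Acst c l * δ := by positivity
  refine ⟨n, hn, q, hq, ?_, ?_⟩
  · rw [← hδε, hD]; linarith
  · rw [← hδε, hD]
    linarith [(abs_le.1 h2).1, (abs_lt.1 hs').1]

lemma Omega_forward (G : Good c l L M B f F) {x : Circle1} (hx : x ∈ OmegaSet f (cmap F)) :
    cmap F x ∈ OmegaSet f (cmap F) := by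
  refine G.mem_Omega_of_periodic fun ε hε => ?_
  have hM := G.hM
  obtain ⟨n, hn, q, hq, hqx, hs⟩ := G.periodic_of_mem_Omega hx (ε := ε / (M + 1)) (by positivity)
  have hM1 : ε / (M + 1) * (M + 1) = ε := by field_simp
  have he : 0 < ε / (M + 1) := by positivity
  refine ⟨n, hn, cmap F q, ?_, ?_, ?_⟩
  · rw [← Function.iterate_succ_apply, Function.iterate_succ_apply', hq]
  · have := G.lip_cmap q x
    have := mul_le_mul_of_nonneg_left hqx.le hM
    linarith
  · have h1 := bsum_add f (cmap F) (beta f (cmap F)) 1 n q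
    have h2 := bsum_add f (cmap F) (beta f (cmap F)) n 1 q
    rw [hq] at h2
    rw [add_comm 1 n, h2] at h1
    simp only [Function.iterate_one] at h1
    nlinarith

/-- Almost-closed orbit segments near `x` that almost maximize make `x` non-wandering; the segment
need only pass near `x` at some time `i`. -/
lemma mem_Omega_of_loop (G : Good c l L M B f F) {x : Circle1}
    (h : ∀ ε > 0, ∃ n, 1 ≤ n ∧ ∃ z, ∃ i ≤ n, dist ((cmap F)^[n] z) z ≤ ε ∧
      dist ((cmap F)^[i] z) x ≤ ε ∧ -ε ≤ bsum f (cmap F) (beta f (cmap F)) n z) :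
    x ∈ OmegaSet f (cmap F) := by
  refine G.mem_Omega_of_periodic fun ε hε => ?_
  have hA := G.A_pos
  have hL := G.hL
  have hLA : 0 ≤ L * Acst c l * Acst c l := by positivity
  set D := 2 + Acst c l * Acst c l + L * Acst c l * Acst c l with hD
  have hA2 : 0 < Acst c l * Acst c l := by positivity
  have hDpos : 0 < D := by linarith
  set δ := ε / D with hδ
  have hδε : δ * D = ε := by rw [hδ]; field_simp
  have hδ0 : 0 < δ := by rw [hδ]; positivity
  obtain ⟨n, hn, z, i, hi, hz, hzx, hs⟩ := h δ hδ0
  obtain ⟨q, hq, h1, h2⟩ := G.closing (beta f (cmap F)) hn z hz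
  have h3 := h1 i hi
  have h4 : 0 < Acst c l * Acst c l * δ := by positivity
  have h5 : 0 ≤ L * Acst c l * Acst c l * δ := by positivity
  have hper : ∀ j, (cmap F)^[n] ((cmap F)^[j] q) = (cmap F)^[j] q := fun j => by
    rw [← Function.iterate_add_apply, add_comm, Function.iterate_add_apply, hq]
  refine ⟨n, hn, (cmap F)^[i] q, hper i, ?_, ?_⟩
  · have := dist_triangle ((cmap F)^[i] q) ((cmap F)^[i] z) x
    rw [← hδε, hD]; linarith
  · have e1 := bsum_add f (cmap F) (beta f (cmap F)) i n q
    have e2 := bsum_add f (cmap F) (beta f (cmap F)) n i q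
    rw [hq] at e2
    rw [add_comm i n, e2] at e1
    rw [← hδε, hD]
    linarith [(abs_le.1 h2).1]

/-- A cluster point of a sequence of points on a common orbit along which a Lipschitz function
absorbs the Birkhoff sums is non-wandering. -/
lemma mem_Omega_of_cluster (G : Good c l L M B f F) {K : ℝ} (hK : 0 ≤ K) {g : Circle1 → ℝ}
    (hg : ∀ x y, g x - g y ≤ K * dist x y) {x : Circle1}
    (h : ∀ ε > 0, ∃ n, 1 ≤ n ∧ ∃ z, dist z x < ε ∧ dist ((cmap F)^[n] z) x < ε ∧
      bsum f (cmap F) (beta f (cmap F)) n z = g ((cmap F)^[n] z) - g z) :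
    x ∈ OmegaSet f (cmap F) := by
  refine G.mem_Omega_of_loop fun ε hε => ?_
  have he : ε / (2 * (K + 1)) * (2 * (K + 1)) = ε := by field_simp
  set δ := ε / (2 * (K + 1)) with hδ
  have hδ0 : 0 < δ := by positivity
  obtain ⟨n, hn, z, h1, h2, h3⟩ := h δ hδ0
  have h4 : dist ((cmap F)^[n] z) z ≤ 2 * δ := by
    have := dist_triangle_right ((cmap F)^[n] z) z x
    linarith
  have h5 : 0 ≤ K * δ := by positivity
  refine ⟨n, hn, z, 0, Nat.zero_le _, by linarith, ?_, ?_⟩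
  · simp only [Function.iterate_zero, id_eq]
    linarith
  · rw [h3]
    have := hg z ((cmap F)^[n] z)
    rw [dist_comm] at this
    have := mul_le_mul_of_nonneg_left h4 hK
    linarith

lemma Omega_nonempty (G : Good c l L M B f F) : (OmegaSet f (cmap F)).Nonempty := by
  obtain ⟨g, g0, gC, glip, gsub⟩ := G.exists_subaction
  have hK : 0 ≤ L * Acst c l := mul_nonneg G.hL G.A_pos.le
  have gcont : Continuous g := by
    refine (LipschitzWith.of_dist_le' (K := L * Acst c l) fun x y => ?_).continuous
    rw [Real.dist_eq, abs_le]
    have := glip y x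
    rw [dist_comm] at this
    constructor <;> linarith [glip x y]
  set b := beta f (cmap F) with hb
  -- the accumulated defect of the sub-action along an orbit segment
  set Ψ : ℕ → Circle1 → ℝ := fun n x => g ((cmap F)^[n] x) - g x - bsum f (cmap F) b n x with hΨ
  have Ψ0 : ∀ n x, 0 ≤ Ψ n x := fun n x => by
    have := bsum_le_of_sub gsub n x
    simp only [hΨ]
    linarith
  have Ψadd : ∀ m n x, Ψ (m + n) x = Ψ m x + Ψ n ((cmap F)^[m] x) := fun m n x => by
    simp only [hΨ, bsum_add]
    rw [← Function.iterate_add_apply, add_comm n m]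
    ring
  have Ψc : ∀ n, Continuous (Ψ n) := fun n =>
    ((gcont.comp (G.cont_cmap.iterate n)).sub gcont).sub (G.cont_bsum b n)
  obtain ⟨y, hy⟩ : ∃ y, ∀ n, Ψ n y = 0 := by
    by_contra! hcon
    obtain ⟨m, hm⟩ := isCompact_univ.elim_directed_cover (fun n => {x | 0 < Ψ n x})
      (fun n => isOpen_lt continuous_const (Ψc n))
      (fun x _ => by
        obtain ⟨n, hn⟩ := hcon x
        exact mem_iUnion.2 ⟨n, lt_of_le_of_ne (Ψ0 n x) hn.symm⟩)
      (by
        refine directed_of_isDirected_le ?_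
        intro i j hij x hx
        obtain ⟨k, rfl⟩ := Nat.exists_eq_add_of_le hij
        have hx' : 0 < Ψ i x := hx
        change 0 < Ψ (i + k) x
        rw [Ψadd]
        linarith [Ψ0 k ((cmap F)^[i] x)])
    obtain ⟨x₀, -, hx₀⟩ := isCompact_univ.exists_isMinOn univ_nonempty (Ψc m).continuousOn
    have hpos : 0 < Ψ m x₀ := hm (mem_univ x₀)
    have hgrow : ∀ (k : ℕ) x, k * Ψ m x₀ ≤ Ψ (m * k) x := by
      intro k
      induction k with
      | zero => intro x; simpa using Ψ0 _ x
      | succ k ih =>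
        intro x
        rw [Nat.mul_succ, Ψadd]
        push_cast
        have : Ψ m x₀ ≤ Ψ m ((cmap F)^[m * k] x) := hx₀ (mem_univ _)
        linarith [ih x]
    obtain ⟨k, hk⟩ := exists_nat_gt (L * Acst c l * 4 / Ψ m x₀)
    rw [div_lt_iff₀ hpos] at hk
    obtain ⟨x, hx⟩ := G.exists_bsum_nonneg (m * k)
    have h1 := hgrow k x
    simp only [hΨ] at h1 hk
    linarith [g0 x, gC ((cmap F)^[m * k] x)]
  obtain ⟨x, hx⟩ := exists_clusterPt_of_compactSpace (map (fun k : ℕ => (cmap F)^[k] y) atTop)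
  have hx' : MapClusterPt x atTop (fun k : ℕ => (cmap F)^[k] y) := hx
  refine ⟨x, G.mem_Omega_of_cluster hK glip fun ε hε => ?_⟩
  have hfr := frequently_atTop.1 (hx'.frequently (Metric.ball_mem_nhds x hε))
  obtain ⟨a, -, ha⟩ := hfr 0
  obtain ⟨d, hd, hd'⟩ := hfr (a + 1)
  obtain ⟨n, rfl⟩ := Nat.exists_eq_add_of_le hd
  refine ⟨n + 1, by omega, (cmap F)^[a] y, ha, ?_, ?_⟩
  · rw [← Function.iterate_add_apply, show n + 1 + a = a + 1 + n by ring]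
    exact hd'
  · have h1 := Ψadd a (n + 1) y
    rw [hy, hy] at h1
    simp only [hΨ] at h1
    linarith

end Good

/-! ### Periodic orbits -/

lemma IsPeriodicOrbit.exists_iterate {T : Circle1 → Circle1} {A : Set Circle1}
    (h : IsPeriodicOrbit T A) {a b : Circle1} (ha : a ∈ A) (hb : b ∈ A) :
    ∃ s, T^[s] a = b := by
  obtain ⟨x, ⟨n, hn, hx⟩, rfl⟩ := h
  obtain ⟨i, rfl⟩ := ha
  obtain ⟨j, rfl⟩ := hb
  refine ⟨j + (n * i - i), ?_⟩
  simp only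
  rw [← Function.iterate_add_apply, add_assoc, Nat.sub_add_cancel (Nat.le_mul_of_pos_left i hn),
    Function.iterate_add_apply, Function.iterate_mul]
  congr 1
  exact Function.iterate_fixed hx i

lemma IsPeriodicOrbit.finite {T : Circle1 → Circle1} {A : Set Circle1}
    (h : IsPeriodicOrbit T A) : A.Finite := by
  obtain ⟨x, ⟨n, hn, hx⟩, rfl⟩ := h
  refine ((Finset.range n).finite_toSet.image fun k => T^[k] x).subset ?_
  rintro _ ⟨k, rfl⟩
  exact ⟨k % n, by simpa using Nat.mod_lt k hn, Function.IsPeriodicPt.iterate_mod_apply hx k⟩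

lemma IsPeriodicOrbit.map_mem {T : Circle1 → Circle1} {A : Set Circle1}
    (h : IsPeriodicOrbit T A) {a : Circle1} (ha : a ∈ A) : T a ∈ A := by
  obtain ⟨x, ⟨n, hn, hx⟩, rfl⟩ := h
  obtain ⟨i, rfl⟩ := ha
  exact ⟨i + 1, by simp only [Function.iterate_succ_apply']⟩

lemma IsPeriodicOrbit.exists_sep {T : Circle1 → Circle1} {A : Set Circle1}
    (h : IsPeriodicOrbit T A) : ∃ s > 0, ∀ a ∈ A, ∀ b ∈ A, dist a b < s → a = b := by
  by_cases hA : A.Nontrivial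
  · refine ⟨A.infsep, h.finite.infsep_pos_iff_nontrivial.2 hA, fun a ha b hb hab => ?_⟩
    by_contra hne
    exact absurd (Set.infsep_le_dist_of_mem ha hb hne) (not_le.2 hab)
  · rw [Set.not_nontrivial_iff] at hA
    exact ⟨1, one_pos, fun a ha b hb _ => hA ha hb⟩

/-- The two-sided orbit of a periodic point. -/
lemma exists_int_orbit {T : Circle1 → Circle1} {n : ℕ} (hn : 1 ≤ n) {q : Circle1}
    (hq : T^[n] q = q) :
    ∃ y : ℤ → Circle1, y 0 = q ∧ (∀ j, T (y j) = y (j + 1)) ∧ ∀ j, ∃ m < n, y j = T^[m] q := by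
  have hn' : (n : ℤ) ≠ 0 := by omega
  refine ⟨fun j => T^[(j % n).toNat] q, by simp, fun j => ?_, fun j => ⟨_, ?_, rfl⟩⟩
  · simp only
    rw [← Function.iterate_succ_apply' T, ← Function.IsPeriodicPt.iterate_mod_apply hq,
      ← Function.IsPeriodicPt.iterate_mod_apply hq ((j + 1) % n).toNat]
    congr 1
    zify
    rw [Int.toNat_of_nonneg (Int.emod_nonneg _ hn'), Int.toNat_of_nonneg (Int.emod_nonneg _ hn')]
    simp
  · zify
    rw [Int.toNat_of_nonneg (Int.emod_nonneg _ hn')]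
    exact Int.emod_lt_of_pos _ (by omega)

namespace Good

variable {c l L M B : ℝ} {f : Circle1 → ℝ} {F : ℝ → ℝ}

/-- If `Ω` is a single periodic orbit, every two-sided orbit calibrated by a Lipschitz function
lies in `Ω`: it is homoclinic to `Ω`, hence can be closed up at the periodic orbit. -/
lemma biinfinite_mem_Omega (G : Good c l L M B f F)
    (hO : IsPeriodicOrbit (cmap F) (OmegaSet f (cmap F))) {K : ℝ} (hK : 0 ≤ K)
    {g : Circle1 → ℝ} (glip : ∀ x y, g x - g y ≤ K * dist x y) {y : ℤ → Circle1}
    (hy : ∀ j, cmap F (y j) = y (j + 1))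
    (heq : ∀ j, g (y j) + f (y j) - beta f (cmap F) = g (y (j + 1))) :
    y 0 ∈ OmegaSet f (cmap F) := by
  have hit : ∀ (n : ℕ) j, (cmap F)^[n] (y j) = y (j + n) := by
    intro n j
    induction n with
    | zero => simp
    | succ n ih =>
      rw [Function.iterate_succ_apply', ih, hy]
      push_cast
      rw [add_assoc]
  have hbs : ∀ (n : ℕ) j, bsum f (cmap F) (beta f (cmap F)) n (y j) = g (y (j + n)) - g (y j) := by
    intro n j
    induction n with
    | zero => simp [bsum_zero]
    | succ n ih =>
      rw [bsum_succ, ih, hit]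
      have := heq (j + n)
      push_cast
      rw [← add_assoc]
      linarith
  obtain ⟨qp, hqp⟩ := exists_clusterPt_of_compactSpace (map (fun k : ℕ => y k) atTop)
  obtain ⟨qm, hqm⟩ := exists_clusterPt_of_compactSpace (map (fun k : ℕ => y (-k)) atTop)
  have hqp' : MapClusterPt qp atTop (fun k : ℕ => y k) := hqp
  have hqm' : MapClusterPt qm atTop (fun k : ℕ => y (-k)) := hqm
  have frp : ∀ ε > 0, ∀ N : ℕ, ∃ k ≥ N, dist (y k) qp < ε := fun ε hε =>
    frequently_atTop.1 (hqp'.frequently (Metric.ball_mem_nhds qp hε))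
  have frm : ∀ ε > 0, ∀ N : ℕ, ∃ k ≥ N, dist (y (-k)) qm < ε := fun ε hε =>
    frequently_atTop.1 (hqm'.frequently (Metric.ball_mem_nhds qm hε))
  have hqpO : qp ∈ OmegaSet f (cmap F) := by
    refine G.mem_Omega_of_cluster hK glip fun ε hε => ?_
    obtain ⟨a, -, ha⟩ := frp ε hε 0
    obtain ⟨d, hd, hd'⟩ := frp ε hε (a + 1)
    obtain ⟨n, rfl⟩ := Nat.exists_eq_add_of_le hd
    have e : ((a + 1 + n : ℕ) : ℤ) = a + (n + 1 : ℕ) := by push_cast; ring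
    rw [e] at hd'
    exact ⟨n + 1, by omega, y a, ha, by rw [hit]; exact hd', by rw [hbs, hit]⟩
  have hqmO : qm ∈ OmegaSet f (cmap F) := by
    refine G.mem_Omega_of_cluster hK glip fun ε hε => ?_
    obtain ⟨a, -, ha⟩ := frm ε hε 0
    obtain ⟨d, hd, hd'⟩ := frm ε hε (a + 1)
    obtain ⟨n, rfl⟩ := Nat.exists_eq_add_of_le hd
    have e : -(a : ℤ) = -((a + 1 + n : ℕ) : ℤ) + (n + 1 : ℕ) := by push_cast; ring
    rw [e] at ha
    exact ⟨n + 1, by omega, _, hd', by rw [hit]; exact ha, by rw [hbs, hit]⟩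
  obtain ⟨s, hs⟩ := hO.exists_iterate hqmO hqpO
  refine G.mem_Omega_of_loop fun ε hε => ?_
  have he : ε / (2 * (K + 1)) * (2 * (K + 1)) = ε := by field_simp
  set δ := ε / (2 * (K + 1)) with hδ
  have hδ0 : 0 < δ := by positivity
  have hKδ : 0 ≤ K * δ := by positivity
  obtain ⟨ρ, hρ, hρ'⟩ := Metric.continuousAt_iff.1 (G.cont_cmap.iterate s).continuousAt δ hδ0
  obtain ⟨a, ha, ha'⟩ := frm ρ hρ s
  obtain ⟨d, hd, hd'⟩ := frp δ hδ0 1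
  have hz := hρ' ha'
  rw [hs, hit] at hz
  obtain ⟨i, rfl⟩ := Nat.exists_eq_add_of_le ha
  have e1 : -((s + i : ℕ) : ℤ) + s = -(i : ℤ) := by push_cast; ring
  rw [e1] at hz
  have e2 : -(i : ℤ) + (i + d : ℕ) = d := by push_cast; ring
  have h4 : dist (y d) (y (-(i : ℤ))) ≤ 2 * δ := by
    have := dist_triangle_right (y d) (y (-(i : ℤ))) qp
    linarith
  refine ⟨i + d, by omega, y (-(i : ℤ)), i, by omega, ?_, ?_, ?_⟩
  · rw [hit, e2]
    linarith
  · rw [hit]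
    simp [hε.le]
  · rw [hbs, e2]
    have := glip (y (-(i : ℤ))) (y d)
    rw [dist_comm] at this
    have := mul_le_mul_of_nonneg_left h4 hK
    linarith

/-- Expansiveness. -/
lemma expansive (G : Good c l L M B f F) {e : ℝ} (hMe : M * e ≤ 1 / 2)
    {x x' : Circle1} (h : ∀ i, dist ((cmap F)^[i] x) ((cmap F)^[i] x') ≤ e) : x = x' := by
  obtain ⟨t, rfl, ht⟩ := exists_lift_near (rep x) x'
  rw [← coe_rep x] at h ⊢
  simp only [G.iter_coe] at h
  have key : ∀ i, |F^[i] (rep x) - F^[i] t| ≤ e := by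
    intro i
    induction i with
    | zero =>
      simp only [Function.iterate_zero, id_eq]
      rw [ht]
      simpa using h 0
    | succ i ih =>
      have h1 := h (i + 1)
      rwa [dist_coe_eq] at h1
      rw [Function.iterate_succ_apply', Function.iterate_succ_apply']
      exact (G.lipF _ _).trans ((mul_le_mul_of_nonneg_left ih G.hM).trans hMe)
  have hzero : |rep x - t| = 0 := by
    by_contra hne
    have hpos : 0 < |rep x - t| := lt_of_le_of_ne (abs_nonneg _) (Ne.symm hne)
    have hcp : 0 < c * |rep x - t| := mul_pos G.hc hpos
    obtain ⟨j, hj⟩ := pow_unbounded_of_one_lt (e / (c * |rep x - t|)) G.hl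
    rw [div_lt_iff₀ hcp] at hj
    have h1 := G.expd j (rep x) t
    linarith [key j]
  rw [sub_eq_zero.1 (abs_eq_zero.1 hzero)]

/-- If `Ω` of a nearby pair stays close to a periodic orbit `O` of the original map, it is itself a
periodic orbit: orbits in it follow the itinerary of `O`, and expansiveness leaves one orbit. -/
lemma periodicOrbit_of_near {T₀ : Circle1 → Circle1} {O : Set Circle1}
    (hO : IsPeriodicOrbit T₀ O) (hM : 0 ≤ M) : ∃ η > 0, ∀ f F, Good c l L M B f F →
      (∀ x, dist (cmap F x) (T₀ x) ≤ η) →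
      (∀ x ∈ OmegaSet f (cmap F), ∃ o ∈ O, dist x o ≤ η) →
      IsPeriodicOrbit (cmap F) (OmegaSet f (cmap F)) := by
  obtain ⟨s, hs, hsep⟩ := hO.exists_sep
  set η := min (1 / (4 * (M + 1))) (s / (M + 3)) with hη
  have hη0 : 0 < η := by positivity
  have h1 : η * (4 * (M + 1)) ≤ 1 := by
    have := min_le_left (1 / (4 * (M + 1))) (s / (M + 3))
    rwa [← hη, le_div_iff₀ (by positivity)] at this
  have h2 : η * (M + 3) ≤ s := by
    have := min_le_right (1 / (4 * (M + 1))) (s / (M + 3))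
    rwa [← hη, le_div_iff₀ (by positivity)] at this
  refine ⟨η, hη0, fun f F G hT hΩ => ?_⟩
  have hMη : 0 ≤ M * η := by positivity
  have step : ∀ x ∈ OmegaSet f (cmap F), ∀ o ∈ O, dist x o ≤ η → dist (cmap F x) (T₀ o) ≤ η := by
    intro x hx o ho hxo
    obtain ⟨o', ho', hd⟩ := hΩ _ (G.Omega_forward hx)
    have e1 := G.lip_cmap x o
    have e2 := hT o
    have e3 := dist_triangle (cmap F x) (cmap F o) (T₀ o)
    have e4 := dist_triangle_left o' (T₀ o) (cmap F x)
    have e5 := mul_le_mul_of_nonneg_left hxo hM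
    rwa [← hsep o' ho' (T₀ o) (hO.map_mem ho) (by linarith)]
  have steps : ∀ (k : ℕ), ∀ x ∈ OmegaSet f (cmap F), ∀ o ∈ O, dist x o ≤ η →
      (cmap F)^[k] x ∈ OmegaSet f (cmap F) ∧ T₀^[k] o ∈ O ∧
        dist ((cmap F)^[k] x) (T₀^[k] o) ≤ η := by
    intro k x hx o ho hxo
    induction k with
    | zero => exact ⟨hx, ho, hxo⟩
    | succ k ih =>
      simp only [Function.iterate_succ_apply']
      exact ⟨G.Omega_forward ih.1, hO.map_mem ih.2.1, step _ ih.1 _ ih.2.1 ih.2.2⟩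
  have uniq : ∀ x ∈ OmegaSet f (cmap F), ∀ x' ∈ OmegaSet f (cmap F), ∀ o ∈ O, dist x o ≤ η →
      dist x' o ≤ η → x = x' := by
    intro x hx x' hx' o ho hxo hxo'
    refine G.expansive (e := 2 * η) (by nlinarith) fun i => ?_
    have e1 := (steps i x hx o ho hxo).2.2
    have e2 := (steps i x' hx' o ho hxo').2.2
    linarith [dist_triangle_right ((cmap F)^[i] x) ((cmap F)^[i] x') (T₀^[i] o)]
  obtain ⟨x, hx⟩ := G.Omega_nonempty
  obtain ⟨o, ho, hxo⟩ := hΩ x hx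
  refine ⟨x, ?_, ?_⟩
  · obtain ⟨m, hm⟩ := hO.exists_iterate (hO.map_mem ho) ho
    refine ⟨m + 1, by omega, ?_⟩
    have := steps (m + 1) x hx o ho hxo
    rw [Function.iterate_succ_apply T₀, hm] at this
    exact uniq _ this.1 x hx o ho this.2.2 hxo
  · refine Subset.antisymm (fun x' hx' => ?_) ?_
    · obtain ⟨o', ho', hxo'⟩ := hΩ x' hx'
      obtain ⟨k, rfl⟩ := hO.exists_iterate ho ho'
      have := steps k x hx o ho hxo
      exact ⟨k, uniq _ this.1 x' hx' _ ho' this.2.2 hxo'⟩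
    · rintro _ ⟨k, rfl⟩
      exact (steps k x hx o ho hxo).1

/-- Every almost maximizing periodic orbit is a two-sided orbit almost calibrated by a bounded
Lipschitz sub-action. -/
lemma exists_almost_calibrated (G : Good c l L M B f F) {n : ℕ} (hn : 1 ≤ n) {q : Circle1}
    (hq : (cmap F)^[n] q = q) {ε : ℝ} (hs : -ε ≤ bsum f (cmap F) (beta f (cmap F)) n q) :
    ∃ gy : (Circle1 → ℝ) × (ℤ → Circle1), (∀ x, gy.1 x ∈ Icc 0 (L * Acst c l * 4)) ∧
      (∀ x y, gy.1 x - gy.1 y ≤ L * Acst c l * dist x y) ∧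
      (∀ x, gy.1 x + f x - beta f (cmap F) ≤ gy.1 (cmap F x)) ∧
      gy.2 0 = q ∧ (∀ j, cmap F (gy.2 j) = gy.2 (j + 1)) ∧
      ∀ j, gy.1 (gy.2 (j + 1)) ≤ gy.1 (gy.2 j) + f (gy.2 j) - beta f (cmap F) + ε := by
  obtain ⟨g, g0, gC, glip, gsub⟩ := G.exists_subaction
  obtain ⟨y, hy0, hyT, hym⟩ := exists_int_orbit hn hq
  refine ⟨(g, y), fun x => ⟨g0 x, gC x⟩, glip, gsub, hy0, hyT, fun j => ?_⟩
  simp only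
  obtain ⟨m, hm, hj⟩ := hym j
  obtain ⟨k, rfl⟩ := Nat.exists_eq_add_of_le (Nat.succ_le_of_lt hm)
  rw [bsum_add, bsum_succ] at hs
  have h1 := bsum_le_of_sub gsub m q
  have h2 := bsum_le_of_sub gsub k ((cmap F)^[m + 1] q)
  rw [← Function.iterate_add_apply, add_comm k, hq] at h2
  rw [Function.iterate_succ_apply', ← hj] at h2
  rw [← hj] at hs h1
  rw [← hyT]
  simp only [Nat.succ_eq_add_one, Function.iterate_succ_apply', ← hj] at hs h2
  linarith

/-- Semicontinuity: along pairs converging uniformly to a pair whose `Ω` is a periodic orbit, with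
common bounds, almost maximizing periodic points approach that orbit. -/
lemma near_Omega {f₀ : Circle1 → ℝ} {F₀ : ℝ → ℝ} (G₀ : Good c l L M B f₀ F₀)
    (hO : IsPeriodicOrbit (cmap F₀) (OmegaSet f₀ (cmap F₀))) {η : ℝ} (hη : 0 < η)
    {ι : Type*} {V : Filter ι} {f : ι → Circle1 → ℝ} {F : ι → ℝ → ℝ} {ε : ι → ℝ}
    (hε : Tendsto ε V (𝓝 0)) (hG : ∀ᶠ i in V, Good c l L M B (f i) (F i))
    (hf : TendstoUniformly f f₀ V) (hF : TendstoUniformly (fun i => cmap (F i)) (cmap F₀) V) :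
    ∀ᶠ i in V, ∀ q n, 1 ≤ n → (cmap (F i))^[n] q = q →
      -ε i ≤ bsum (f i) (cmap (F i)) (beta (f i) (cmap (F i))) n q →
      ∃ o ∈ OmegaSet f₀ (cmap F₀), dist q o < η := by
  refine mem_iff_ultrafilter.2 fun U hU => ?_
  by_contra hcon
  have hcon' := Ultrafilter.compl_mem_iff_notMem.2 hcon
  have hbad : ∀ᶠ i in (U : Filter ι), ∃ gy : (Circle1 → ℝ) × (ℤ → Circle1),
      (∀ x, gy.1 x ∈ Icc 0 (L * Acst c l * 4)) ∧
      (∀ x y, gy.1 x - gy.1 y ≤ L * Acst c l * dist x y) ∧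
      (∀ x, gy.1 x + f i x - beta (f i) (cmap (F i)) ≤ gy.1 (cmap (F i) x)) ∧
      (∀ o ∈ OmegaSet f₀ (cmap F₀), η ≤ dist (gy.2 0) o) ∧
      (∀ j, cmap (F i) (gy.2 j) = gy.2 (j + 1)) ∧
      ∀ j, gy.1 (gy.2 (j + 1)) ≤ gy.1 (gy.2 j) + f i (gy.2 j) - beta (f i) (cmap (F i)) + ε i := by
    filter_upwards [hcon', hU hG] with i hi hGi
    simp only [mem_compl_iff, mem_ofPred_eq, not_forall] at hi
    obtain ⟨q, n, hn, hq, hs, hno⟩ := hi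
    push Not at hno
    obtain ⟨gy, a1, a2, a3, a4, a5, a6⟩ := hGi.exists_almost_calibrated hn hq hs
    exact ⟨gy, a1, a2, a3, by rw [a4]; exact hno, a5, a6⟩
  obtain ⟨gy, hgy⟩ := hbad.choice
  have hK : 0 ≤ L * Acst c l := mul_nonneg G₀.hL G₀.A_pos.le
  -- limits along the ultrafilter of the orbits, the sub-actions and the maximal averages
  have hylim : ∀ j, ∃ a, Tendsto (fun i => (gy i).2 j) U (𝓝 a) := fun j =>
    ⟨_, (U.map fun i => (gy i).2 j).le_nhds_lim⟩
  choose y hy using hylim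
  have hglim : ∀ x, ∃ a ∈ Icc 0 (L * Acst c l * 4), Tendsto (fun i => (gy i).1 x) U (𝓝 a) := by
    intro x
    refine isCompact_Icc.ultrafilter_le_nhds (U.map fun i => (gy i).1 x) ?_
    rw [le_principal_iff]
    exact hgy.mono fun i hi => hi.1 x
  choose g hgI hg using hglim
  obtain ⟨b, -, hb⟩ : ∃ b ∈ Icc (-B) B, Tendsto (fun i => beta (f i) (cmap (F i))) U (𝓝 b) := by
    refine isCompact_Icc.ultrafilter_le_nhds (U.map fun i => beta (f i) (cmap (F i))) ?_
    rw [le_principal_iff]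
    exact (hG.filter_mono hU).mono fun i hi => abs_le.1 hi.abs_beta_le
  have hfU : TendstoUniformly f f₀ U := fun u hu => hU (hf u hu)
  have hFU : TendstoUniformly (fun i => cmap (F i)) (cmap F₀) U := fun u hu => hU (hF u hu)
  have hεU : Tendsto ε U (𝓝 0) := hε.mono_left hU
  have glip : ∀ x y, g x - g y ≤ L * Acst c l * dist x y := fun x y =>
    le_of_tendsto ((hg x).sub (hg y)) (hgy.mono fun i hi => hi.2.1 x y)
  have gmove : ∀ (z : ι → Circle1) (x : Circle1), Tendsto z U (𝓝 x) →
      Tendsto (fun i => (gy i).1 (z i)) U (𝓝 (g x)) := by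
    intro z x hz
    have hd : Tendsto (fun i => L * Acst c l * dist (z i) x) U (𝓝 0) := by
      simpa using (tendsto_iff_dist_tendsto_zero.1 hz).const_mul (L * Acst c l)
    have : Tendsto (fun i => (gy i).1 (z i) - (gy i).1 x) U (𝓝 0) := by
      refine squeeze_zero_norm' ?_ hd
      filter_upwards [hgy] with i hi
      rw [Real.norm_eq_abs, abs_le]
      have e1 := hi.2.1 x (z i)
      rw [dist_comm] at e1
      constructor <;> linarith [hi.2.1 (z i) x]
    simpa using this.add (hg x)
  have hyT : ∀ j, cmap F₀ (y j) = y (j + 1) := fun j => by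
    refine tendsto_nhds_unique ((hFU.tendsto_comp G₀.cont_cmap.continuousAt (hy j)).congr' ?_)
      (hy (j + 1))
    exact hgy.mono fun i hi => hi.2.2.2.2.1 j
  have gsub : ∀ x, g x + f₀ x - b ≤ g (cmap F₀ x) := fun x => by
    refine le_of_tendsto_of_tendsto (((hg x).add (hfU.tendsto_at x)).sub hb)
      (gmove _ _ (hFU.tendsto_at x)) ?_
    exact hgy.mono fun i hi => hi.2.2.1 x
  have geq : ∀ j, g (y j) + f₀ (y j) - b = g (y (j + 1)) := fun j => by
    refine le_antisymm (hyT j ▸ gsub (y j)) ?_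
    have h1 := (((gmove _ _ (hy j)).add
      (hfU.tendsto_comp G₀.cont_f.continuousAt (hy j))).sub hb).add hεU
    rw [add_zero] at h1
    refine le_of_tendsto_of_tendsto (gmove _ _ (hy (j + 1))) h1 ?_
    exact hgy.mono fun i hi => hi.2.2.2.2.2 j
  -- the limit of the maximal averages is the maximal average of the limit
  have hbβ : b = beta f₀ (cmap F₀) := by
    set C := L * Acst c l * 4 with hC
    have small : ∀ t : ℝ, (∀ n : ℕ, n * t ≤ 2 * C) → t ≤ 0 := by
      intro t ht
      by_contra! hpos
      obtain ⟨n, hn⟩ := exists_nat_gt (2 * C / t)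
      rw [div_lt_iff₀ hpos] at hn
      linarith [ht n]
    apply le_antisymm
    · rw [← sub_nonpos]
      refine small _ fun n => ?_
      have hbs : ∀ (n : ℕ), (cmap F₀)^[n] (y 0) = y n ∧
          bsum f₀ (cmap F₀) b n (y 0) = g (y n) - g (y 0) := by
        intro n
        induction n with
        | zero => simp [bsum_zero]
        | succ n ih =>
          rw [bsum_succ, Function.iterate_succ_apply', ih.1, ih.2, hyT]
          have := geq n
          push_cast
          exact ⟨rfl, by linarith⟩
      have h1 := (hbs n).2
      have h2 := G₀.bsum_le n (y 0)
      rw [bsum_change _ _ _ b] at h2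
      linarith [(hgI (y n)).1, (hgI (y 0)).2]
    · rw [← sub_nonpos]
      refine small _ fun n => ?_
      obtain ⟨x, hx⟩ := G₀.exists_bsum_nonneg n
      have h1 := bsum_le_of_sub gsub n x
      rw [bsum_change _ _ _ b] at hx
      have := (hgI x).1
      have := (hgI ((cmap F₀)^[n] x)).2
      linarith [(hgI x).2]
  subst hbβ
  have hmem := G₀.biinfinite_mem_Omega hO hK glip hyT geq
  have : η ≤ dist (y 0) (y 0) :=
    ge_of_tendsto ((hy 0).dist tendsto_const_nhds) (hgy.mono fun i hi => hi.2.2.2.1 _ hmem)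
  rw [dist_self] at this
  linarith

end Good

/-! ### Common bounds on a `C^1`-neighbourhood -/

lemma tendstoUniformly_comp {ι : Type*} {V : Filter ι} {u h : ι → ℝ → ℝ} {u₀ h₀ : ℝ → ℝ}
    (hu : TendstoUniformly u u₀ V) (huc : UniformContinuous u₀) (hh : TendstoUniformly h h₀ V) :
    TendstoUniformly (fun i x => u i (h i x)) (fun x => u₀ (h₀ x)) V := by
  rw [Metric.tendstoUniformly_iff] at *
  intro ε hε
  obtain ⟨δ, hδ, hδ'⟩ := Metric.uniformContinuous_iff.1 huc (ε / 2) (by positivity)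
  filter_upwards [hu (ε / 2) (by positivity), hh δ hδ] with i h1 h2 x
  have := dist_triangle (u₀ (h₀ x)) (u₀ (h i x)) (u i (h i x))
  linarith [h1 (h i x), hδ' (h2 x)]

lemma uniformContinuous_of_periodic {D : ℝ → ℝ} (hD : Continuous D)
    (hper : ∀ x, D (x + 1) = D x) : UniformContinuous D := by
  have hper' : Function.Periodic D 1 := hper
  have hc : Continuous (hper'.lift) := continuous_coinduced_dom.2 hD
  have h2 : D = fun x : ℝ => hper'.lift (x : Circle1) := rfl
  rw [h2]
  have h3 : UniformContinuous (fun x : ℝ => (x : Circle1)) :=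
    (LipschitzWith.of_dist_le_mul (K := 1) fun x y => by
      simpa [Real.dist_eq] using dist_coe_le x y).uniformContinuous
  exact (CompactSpace.uniformContinuous_of_continuous hc).comp h3

lemma bounded_of_periodic {D : ℝ → ℝ} (hD : Continuous D)
    (hper : ∀ x, D (x + 1) = D x) : ∃ K, 0 ≤ K ∧ ∀ x, |D x| ≤ K := by
  have hper' : Function.Periodic D 1 := hper
  have hc : Continuous (hper'.lift) := continuous_coinduced_dom.2 hD
  obtain ⟨K, hK⟩ := isCompact_univ.exists_bound_of_continuousOn hc.continuousOn
  have h : ∀ x, |D x| ≤ K := fun x => hK (x : Circle1) (mem_univ _)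
  exact ⟨K, (abs_nonneg _).trans (h 0), h⟩

lemma deriv_periodic {F : ℝ → ℝ} {d : ℝ} (h : ∀ x, F (x + 1) = F x + d) (x : ℝ) :
    deriv F (x + 1) = deriv F x := by
  rw [← deriv_comp_add_const F 1 x]
  have : (fun x => F (x + 1)) = fun x => F x + d := funext h
  rw [this, deriv_add_const]

lemma lip_of_deriv {F : ℝ → ℝ} (hF : Differentiable ℝ F) {K : ℝ} (h : ∀ x, |deriv F x| ≤ K)
    (x y : ℝ) : |F x - F y| ≤ K * |x - y| :=
  convex_univ.norm_image_sub_le_of_norm_deriv_le (fun z _ => hF z) (fun z _ => h z)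
    (mem_univ y) (mem_univ x)

lemma expand_of_deriv {F : ℝ → ℝ} (hF : Differentiable ℝ F) {K : ℝ} (h : ∀ x, K ≤ |deriv F x|)
    (x y : ℝ) : K * |x - y| ≤ |F x - F y| := by
  wlog hxy : x < y generalizing x y with H
  · rcases eq_or_lt_of_le (not_lt.1 hxy) with rfl | hlt
    · simp
    · rw [abs_sub_comm, abs_sub_comm (F x)]
      exact H y x hlt
  obtain ⟨z, -, hz⟩ := exists_deriv_eq_slope F hxy hF.continuous.continuousOn hF.differentiableOn
  have h1 := h z
  have hpos : 0 < |y - x| := abs_pos.2 (by linarith)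
  rw [hz, abs_div, le_div_iff₀ hpos] at h1
  rwa [abs_sub_comm, abs_sub_comm (F x)]

lemma abs_deriv_iterate_add {F : ℝ → ℝ} (hF : Differentiable ℝ F) (m n : ℕ) (x : ℝ) :
    |deriv (F^[m + n]) x| = |deriv (F^[m]) (F^[n] x)| * |deriv (F^[n]) x| := by
  rw [Function.iterate_add, deriv_comp x (hF.iterate m _) (hF.iterate n _), abs_mul]

lemma pow_le_abs_deriv_iterate {F : ℝ → ℝ} (hF : Differentiable ℝ F) {a : ℝ} (ha : 0 ≤ a)
    (h : ∀ x, a ≤ |deriv F x|) (n : ℕ) (x : ℝ) : a ^ n ≤ |deriv (F^[n]) x| := by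
  induction n with
  | zero => simp
  | succ n ih =>
    rw [add_comm n 1, abs_deriv_iterate_add hF, Function.iterate_one, pow_add, pow_one]
    exact mul_le_mul (h _) ih (by positivity) (abs_nonneg _)

/-- Doubling after `N` steps gives uniform exponential expansion. -/
lemma expd_of_doubling {N : ℕ} (hN : 1 ≤ N) {a : ℝ} (ha : 0 < a) (ha1 : a ≤ 1) :
    ∃ c > 0, ∃ l > 1, ∀ F : ℝ → ℝ, Differentiable ℝ F → (∀ x, a ≤ |deriv F x|) →
      (∀ x, 2 ≤ |deriv (F^[N]) x|) → ∀ n x, c * l ^ n ≤ |deriv (F^[n]) x| := by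
  have hN0 : N ≠ 0 := by omega
  refine ⟨a ^ N / 2, by positivity, (2 : ℝ) ^ ((N : ℝ)⁻¹),
    Real.one_lt_rpow (by norm_num) (by positivity), fun F hF h1 h2 n x => ?_⟩
  have hlN : ((2 : ℝ) ^ ((N : ℝ)⁻¹)) ^ N = 2 := Real.rpow_inv_natCast_pow (by norm_num) hN0
  have hl1 : 1 ≤ (2 : ℝ) ^ ((N : ℝ)⁻¹) := Real.one_le_rpow (by norm_num) (by positivity)
  generalize (2 : ℝ) ^ ((N : ℝ)⁻¹) = l at hlN hl1
  have hq : ∀ (q : ℕ) x, 2 ^ q ≤ |deriv (F^[N * q]) x| := by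
    intro q x
    rw [Function.iterate_mul]
    exact pow_le_abs_deriv_iterate (hF.iterate N) (by norm_num) h2 q x
  have hdm := Nat.div_add_mod n N
  have hr : n % N < N := Nat.mod_lt _ (by omega)
  generalize n / N = q at hdm
  generalize n % N = r at hdm hr
  subst hdm
  rw [abs_deriv_iterate_add hF]
  have e1 : l ^ (N * q + r) ≤ 2 ^ (q + 1) := by
    rw [← hlN, ← pow_mul]
    exact pow_le_pow_right₀ hl1 (by rw [Nat.mul_succ]; omega)
  have e2 : a ^ N ≤ |deriv (F^[r]) x| :=
    (pow_le_pow_of_le_one ha.le ha1 hr.le).trans (pow_le_abs_deriv_iterate hF ha.le h1 r x)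
  calc a ^ N / 2 * l ^ (N * q + r) ≤ a ^ N / 2 * 2 ^ (q + 1) := by gcongr
    _ = 2 ^ q * a ^ N := by ring
    _ ≤ _ := mul_le_mul (hq q _) e2 (by positivity) (abs_nonneg _)

/-- Expansion is uniform along maps converging in `C^1`. -/
lemma eventually_expand {F₀ : ℝ → ℝ} (h₀ : ExpandingLift 1 F₀) {ι : Type*} {V : Filter ι}
    {F : ι → ℝ → ℝ} (hd : ∀ i, Differentiable ℝ (F i)) (hF : TendstoUniformly F F₀ V)
    (hF' : TendstoUniformly (fun i => deriv (F i)) (deriv F₀) V) :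
    ∃ c > 0, ∃ l > 1, ∀ᶠ i in V, ∀ n x, c * l ^ n ≤ |deriv ((F i)^[n]) x| := by
  obtain ⟨hC1, ⟨d, hdeg⟩, C, hC, l₀, hl₀, hexp⟩ := h₀
  have hC1' : ContDiff ℝ 1 F₀ := by exact_mod_cast hC1
  have hdiff₀ : Differentiable ℝ F₀ := hC1'.differentiable one_ne_zero
  have hDc : Continuous (deriv F₀) := hC1'.continuous_deriv le_rfl
  have hDper := deriv_periodic hdeg
  have hDuc := uniformContinuous_of_periodic hDc hDper
  obtain ⟨K, hK0, hK⟩ := bounded_of_periodic hDc hDper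
  have hFuc : UniformContinuous F₀ :=
    (LipschitzWith.of_dist_le' (lip_of_deriv hdiff₀ hK)).uniformContinuous
  have hit : ∀ k, TendstoUniformly (fun i => (F i)^[k]) (F₀^[k]) V := by
    intro k
    induction k with
    | zero =>
      rw [Metric.tendstoUniformly_iff]
      exact fun ε hε => Eventually.of_forall fun i x => by simpa using hε
    | succ k ih =>
      have := tendstoUniformly_comp hF hFuc ih
      simpa only [Function.iterate_succ', Function.comp_def] using this
  have hder : ∀ k, TendstoUniformly (fun i x => deriv (F i) ((F i)^[k] x))
      (fun x => deriv F₀ (F₀^[k] x)) V := fun k => tendstoUniformly_comp hF' hDuc (hit k)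
  set m := C * l₀ with hm
  have hm0 : 0 < m := by positivity
  have hm' : ∀ x, m ≤ |deriv F₀ x| := fun x => by simpa using hexp 1 le_rfl x
  obtain ⟨N, hN1, hN⟩ : ∃ N, 1 ≤ N ∧ 4 ≤ C * l₀ ^ N := by
    obtain ⟨j, hj⟩ := pow_unbounded_of_one_lt (4 / C) hl₀
    refine ⟨j + 1, by omega, ?_⟩
    rw [div_lt_iff₀ hC] at hj
    have : l₀ ^ j ≤ l₀ ^ (j + 1) := pow_le_pow_right₀ hl₀.le (by omega)
    nlinarith
  -- a loss factor `θ` per step that costs at most one half over `N` steps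
  set θ : ℝ := 1 - 1 / (2 * N) with hθ
  have hN' : (1 : ℝ) ≤ N := by exact_mod_cast hN1
  have hsmall : 1 / (2 * (N : ℝ)) ≤ 1 / 2 :=
    one_div_le_one_div_of_le (by norm_num) (by linarith)
  have hspos : 0 < 1 / (2 * (N : ℝ)) := by positivity
  have hθ0 : 1 / 2 ≤ θ := by linarith
  have hθN : 1 / 2 ≤ θ ^ N := by
    have := one_add_mul_le_pow (a := -(1 / (2 * (N : ℝ)))) (by linarith) N
    have e : (N : ℝ) * -(1 / (2 * N)) = -(1 / 2) := by field_simp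
    rw [e] at this
    rw [hθ, sub_eq_add_neg]
    linarith
  obtain ⟨c, hc, l, hl, hcl⟩ := expd_of_doubling hN1 (a := min (m / 2) 1) (by positivity)
    (min_le_right _ _)
  refine ⟨c, hc, l, hl, ?_⟩
  have hev : ∀ᶠ i in V, ∀ k ∈ Finset.range N, ∀ x,
      dist (deriv F₀ (F₀^[k] x)) (deriv (F i) ((F i)^[k] x)) < m * (1 - θ) := by
    rw [Filter.eventually_all_finset]
    intro k _
    exact Metric.tendstoUniformly_iff.1 (hder k) _ (mul_pos hm0 (by linarith))
  filter_upwards [hev] with i hi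
  have hstep : ∀ k < N, ∀ x, θ * |deriv F₀ (F₀^[k] x)| ≤ |deriv (F i) ((F i)^[k] x)| := by
    intro k hk x
    have h1 := hi k (Finset.mem_range.2 hk) x
    rw [Real.dist_eq] at h1
    have h2 := abs_sub_abs_le_abs_sub (deriv F₀ (F₀^[k] x)) (deriv (F i) ((F i)^[k] x))
    have h3 := hm' (F₀^[k] x)
    nlinarith
  refine hcl (F i) (hd i) (fun x => ?_) fun x => ?_
  · have h1 := hstep 0 (by omega) x
    simp only [Function.iterate_zero, id_eq] at h1
    have h2 := hm' x
    have h3 := min_le_left (m / 2) 1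
    nlinarith
  · have hind : ∀ k ≤ N, θ ^ k * |deriv (F₀^[k]) x| ≤ |deriv ((F i)^[k]) x| := by
      intro k hk
      induction k with
      | zero => simp
      | succ k ih =>
        rw [add_comm k 1, abs_deriv_iterate_add hdiff₀, abs_deriv_iterate_add (hd i),
          Function.iterate_one, Function.iterate_one, pow_add, pow_one]
        calc _ = (θ * |deriv F₀ (F₀^[k] x)|) * (θ ^ k * |deriv (F₀^[k]) x|) := by ring
          _ ≤ _ := mul_le_mul (hstep k (by omega) x) (ih (by omega))
            (by have : 0 ≤ θ := by linarith
                positivity) (abs_nonneg _)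
    have h1 := hind N le_rfl
    have h2 := hexp N hN1 x
    nlinarith

lemma CrFun.contDiff (f : CrFun 1) : ContDiff ℝ 1 fun x : ℝ => f.1 x := by
  exact_mod_cast f.2

lemma ExpMap.contDiff (F : ExpMap 1) : ContDiff ℝ 1 F.1 := by
  exact_mod_cast F.2.1

section Convergence

variable (p₀ : CrFun 1 × ExpMap 1)

lemma tendstoUniformly_of_crSeq {X : Type*} [TopologicalSpace X] {φ : X → ℝ → ℝ} {x₀ : X}
    (h : Continuous fun x => crSeq 1 (φ x)) :
    TendstoUniformly φ (φ x₀) (𝓝 x₀) ∧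
      TendstoUniformly (fun x => deriv (φ x)) (deriv (φ x₀)) (𝓝 x₀) := by
  have h0 := ((continuous_apply 0).comp h).tendsto x₀
  have h1 := ((continuous_apply 1).comp h).tendsto x₀
  rw [UniformFun.tendsto_iff_tendstoUniformly] at h0 h1
  constructor
  · simpa [crSeq, Function.comp_def] using h0
  · simpa [crSeq, Function.comp_def, iteratedDeriv_one] using h1

lemma tendsto_fun :
    TendstoUniformly (fun (p : CrFun 1 × ExpMap 1) (x : ℝ) => p.1.1 x) (fun x : ℝ => p₀.1.1 x)
        (𝓝 p₀) ∧
      TendstoUniformly (fun p : CrFun 1 × ExpMap 1 => deriv fun x : ℝ => p.1.1 x)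
        (deriv fun x : ℝ => p₀.1.1 x) (𝓝 p₀) := by
  have h : Continuous fun f : CrFun 1 => crSeq 1 fun x : ℝ => f.1 ↑x := continuous_induced_dom
  exact tendstoUniformly_of_crSeq (φ := fun (p : CrFun 1 × ExpMap 1) (x : ℝ) => p.1.1 x)
    (h.comp continuous_fst)

lemma tendsto_map :
    TendstoUniformly (fun p : CrFun 1 × ExpMap 1 => p.2.1) p₀.2.1 (𝓝 p₀) ∧
      TendstoUniformly (fun p : CrFun 1 × ExpMap 1 => deriv p.2.1) (deriv p₀.2.1) (𝓝 p₀) := by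
  have h : Continuous fun F : ExpMap 1 => crSeq 1 F.1 := continuous_induced_dom
  exact tendstoUniformly_of_crSeq (φ := fun p : CrFun 1 × ExpMap 1 => p.2.1)
    (h.comp continuous_snd)

lemma eventually_good : ∃ c l L M B, ∀ᶠ p in 𝓝 p₀, Good c l L M B p.1.1 p.2.1 := by
  have hdF : ∀ p : CrFun 1 × ExpMap 1, Differentiable ℝ p.2.1 := fun p =>
    p.2.contDiff.differentiable one_ne_zero
  have hdf : ∀ p : CrFun 1 × ExpMap 1, Differentiable ℝ fun x : ℝ => p.1.1 x := fun p =>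
    p.1.contDiff.differentiable one_ne_zero
  obtain ⟨c, hc, l, hl, hexp⟩ := eventually_expand p₀.2.2 hdF (tendsto_map p₀).1
    (tendsto_map p₀).2
  have hper : ∀ x : ℝ, p₀.1.1 ((x + 1 : ℝ) : Circle1) = p₀.1.1 x := fun x => by
    simp
  obtain ⟨d, hdeg⟩ := p₀.2.2.2.1
  obtain ⟨M, hM0, hM⟩ := bounded_of_periodic (p₀.2.contDiff.continuous_deriv le_rfl)
    (deriv_periodic hdeg)
  obtain ⟨B, hB0, hB⟩ := bounded_of_periodic p₀.1.contDiff.continuous hper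
  obtain ⟨L, hL0, hL⟩ := bounded_of_periodic (p₀.1.contDiff.continuous_deriv le_rfl)
    (deriv_periodic (d := 0) fun x => by rw [add_zero]; exact hper x)
  refine ⟨c, l, L + 1, M + 1, B + 1, ?_⟩
  filter_upwards [hexp, Metric.tendstoUniformly_iff.1 (tendsto_fun p₀).1 1 one_pos,
    Metric.tendstoUniformly_iff.1 (tendsto_fun p₀).2 1 one_pos,
    Metric.tendstoUniformly_iff.1 (tendsto_map p₀).2 1 one_pos] with p h1 h2 h3 h4
  have near : ∀ {a b K : ℝ}, dist a b < 1 → |a| ≤ K → |b| ≤ K + 1 := by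
    intro a b K hab ha
    rw [Real.dist_eq, abs_sub_comm] at hab
    have := abs_sub_abs_le_abs_sub b a
    linarith
  exact
    { hc := hc
      hl := hl
      hL := by linarith
      hM := by linarith
      cont := (hdF p).continuous
      deg := p.2.2.2.1
      expd := fun n => expand_of_deriv ((hdF p).iterate n) (h1 n)
      lipF := lip_of_deriv (hdF p) fun x => near (h4 x) (hM x)
      lipf := lip_of_deriv (hdf p) fun x => near (h3 x) (hL x)
      bdd := fun x => by
        rw [← coe_rep x]
        exact near (h2 (rep x)) (hB (rep x)) }

lemma tendsto_fun_circle :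
    TendstoUniformly (fun p : CrFun 1 × ExpMap 1 => p.1.1) p₀.1.1 (𝓝 p₀) := by
  rw [Metric.tendstoUniformly_iff]
  intro ε hε
  filter_upwards [Metric.tendstoUniformly_iff.1 (tendsto_fun p₀).1 ε hε] with p hp x
  rw [← coe_rep x]
  exact hp (rep x)

lemma tendsto_map_circle :
    TendstoUniformly (fun p : CrFun 1 × ExpMap 1 => cmap p.2.1) (cmap p₀.2.1) (𝓝 p₀) := by
  rw [Metric.tendstoUniformly_iff]
  intro ε hε
  filter_upwards [Metric.tendstoUniformly_iff.1 (tendsto_map p₀).1 ε hε] with p hp x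
  exact (dist_coe_le _ _).trans_lt (hp (rep x))

end Convergence

/-- Lemma 2.6: the set of `(f,T) ∈ 𝓒^1 × 𝓔^1` such that `Ω(f,T)` is a periodic orbit of
`T` is open. -/
theorem omega_periodic_open :
    IsOpen {p : CrFun 1 × ExpMap 1 |
      IsPeriodicOrbit (cmap p.2.1) (OmegaSet p.1.1 (cmap p.2.1))} := by
  rw [isOpen_iff_mem_nhds]
  intro p₀ hp₀
  have hO : IsPeriodicOrbit (cmap p₀.2.1) (OmegaSet p₀.1.1 (cmap p₀.2.1)) := hp₀
  obtain ⟨c, l, L, M, B, hG⟩ := eventually_good p₀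
  have G₀ := hG.self_of_nhds
  obtain ⟨η, hη, hnear⟩ := Good.periodicOrbit_of_near (c := c) (l := l) (L := L) (B := B) hO G₀.hM
  -- the tolerance `ε` on the Birkhoff sums tends to `0` together with the perturbation
  have hev := G₀.near_Omega hO (half_pos hη) (V := 𝓝 p₀ ×ˢ 𝓝[>] (0 : ℝ))
    (f := fun i => i.1.1.1) (F := fun i => i.1.2.1) (ε := Prod.snd)
    (tendsto_snd.mono_right nhdsWithin_le_nhds) (tendsto_fst.eventually hG)
    (fun u hu => tendsto_fst.eventually (tendsto_fun_circle p₀ u hu))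
    (fun u hu => tendsto_fst.eventually (tendsto_map_circle p₀ u hu))
  filter_upwards [hev.curry, hG, Metric.tendstoUniformly_iff.1 (tendsto_map_circle p₀) η hη]
    with p hp G hT
  refine hnear p.1.1 p.2.1 G (fun x => by rw [dist_comm]; exact (hT x).le) fun x hx => ?_
  obtain ⟨ε, hε, hε0⟩ := (hp.and self_mem_nhdsWithin).exists
  have hε0' : 0 < ε := hε0
  obtain ⟨n, hn, q, hq, hqx, hs⟩ := G.periodic_of_mem_Omega hx (ε := min ε (η / 2))
    (lt_min hε0' (half_pos hη))
  have hm1 := min_le_left ε (η / 2)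
  have hm2 := min_le_right ε (η / 2)
  obtain ⟨o, ho, hqo⟩ := hε q n hn hq (by linarith)
  refine ⟨o, ho, ?_⟩
  have := dist_triangle_left x o q
  linarith
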